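/- arXiv:1504.01148 — 2 statements merged into one kernel-verified Lean document; each statement's English description precedes it below -/
import Mathlib

section
/- Let (R, m) be a commutative Noetherian local ring and M an R-module of Krull dimension n (not necessarily finitely generated) such that H^n_m(M) is an Artinian R-module. Then H^n_I(M) is an Artinian R-module for every ideal I of R. -/
universe u

open CategoryTheory

/-- The cohomological dimension of `M` with respect to `I`:
`cd(I,M) = sup { i ∈ ℕ | H^i_I(M) ≠ 0 }`, as an element of `ℕ∞`. -/
noncomputable def cohomologicalDimension {R : Type u} [CommRing R] (I : Ideal R)
    (M : ModuleCat.{u} R) : ℕ∞ :=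
  sSup {c : ℕ∞ | ∃ i : ℕ, c = i ∧ Nontrivial ((localCohomology I i).obj M)}

open Limits Opposite

namespace CategoryTheory

variable {C D : Type*} [Category* C] [Category* D] [Abelian C] [Abelian D]

lemma exact_of_isos {A₁ A₂ A₃ B₁ B₂ B₃ : D} {f : A₁ ⟶ A₂} {g : A₂ ⟶ A₃} {f' : B₁ ⟶ B₂}
    {g' : B₂ ⟶ B₃} (e₁ : A₁ ≅ B₁) (e₂ : A₂ ≅ B₂) (e₃ : A₃ ≅ B₃) (hf : f ≫ e₂.hom = e₁.hom ≫ f')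
    (hg : g ≫ e₃.hom = e₂.hom ≫ g') {w' : f' ≫ g' = 0} (h : (ShortComplex.mk f' g' w').Exact) :
    ∃ w, (ShortComplex.mk f g w).Exact := by
  have w : f ≫ g = 0 := by
    rw [← cancel_mono e₃.hom, Category.assoc, hg, reassoc_of% hf, w', comp_zero, zero_comp]
  exact ⟨w, (ShortComplex.exact_iff_of_iso (ShortComplex.isoMk e₁ e₂ e₃ hf.symm hg.symm)).2 h⟩

section

variable [HasProjectiveResolutions C]

/-- The left derived functors computed by the chosen projective resolution. -/
noncomputable def leftDerivedIsoHomology (F : C ⥤ D) [F.Additive] (X : C) (n : ℕ) :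
    (F.leftDerived n).obj X ≅
      ((F.mapHomologicalComplex _).obj (projectiveResolution X).complex).homology n :=
  (projectiveResolution X).isoLeftDerivedObj F n

lemma leftDerivedIsoHomology_naturality {X Y : C} (f : X ⟶ Y) :
    ∃ φ : (projectiveResolution X).complex ⟶ (projectiveResolution Y).complex,
      ∀ (F : C ⥤ D) [F.Additive] (n : ℕ),
        (F.leftDerived n).map f ≫ (leftDerivedIsoHomology F Y n).hom =
          (leftDerivedIsoHomology F X n).hom ≫
            HomologicalComplex.homologyMap ((F.mapHomologicalComplex _).map φ) n := by
  let φ := ProjectiveResolution.lift f (projectiveResolution X) (projectiveResolution Y)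
  have comm : φ.f 0 ≫ (projectiveResolution Y).π.f 0 = (projectiveResolution X).π.f 0 ≫ f :=
    ProjectiveResolution.lift_commutes_zero _ _ _
  exact ⟨φ, fun F _ n => ProjectiveResolution.isoLeftDerivedObj_hom_naturality f _ _ φ comm F n⟩

lemma leftDerived_app_comp_leftDerivedIsoHomology {F G : C ⥤ D} [F.Additive] [G.Additive]
    (α : F ⟶ G) (X : C) (n : ℕ) :
    (NatTrans.leftDerived α n).app X ≫ (leftDerivedIsoHomology G X n).hom =
      (leftDerivedIsoHomology F X n).hom ≫ HomologicalComplex.homologyMap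
        ((NatTrans.mapHomologicalComplex α _).app (projectiveResolution X).complex) n := by
  rw [← Iso.eq_comp_inv, Category.assoc]
  exact ProjectiveResolution.leftDerived_app_eq α (projectiveResolution X) n

end

/-- Two composable natural transformations are short exact on projective objects if they
form a short exact sequence after evaluation at each projective object. -/
structure Functor.ShortExactOnProjectives {F₁ F₂ F₃ : C ⥤ D} (α : F₁ ⟶ F₂) (β : F₂ ⟶ F₃) :
    Prop where
  zero : α ≫ β = 0
  shortExact (P : C) [Projective P] :
    (ShortComplex.mk (α.app P) (β.app P) (by rw [← NatTrans.comp_app, zero]; rfl)).ShortExact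

namespace Functor.ShortExactOnProjectives

variable {F₁ F₂ F₃ : C ⥤ D} [F₁.Additive] [F₂.Additive] [F₃.Additive]
  {α : F₁ ⟶ F₂} {β : F₂ ⟶ F₃}

/-- The short complex of chain complexes obtained by applying the functors to a complex. -/
@[simps]
noncomputable def complexes (h : ShortExactOnProjectives α β) (K : ChainComplex C ℕ) :
    ShortComplex (ChainComplex D ℕ) where
  X₁ := (F₁.mapHomologicalComplex _).obj K
  X₂ := (F₂.mapHomologicalComplex _).obj K
  X₃ := (F₃.mapHomologicalComplex _).obj K
  f := (NatTrans.mapHomologicalComplex α _).app K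
  g := (NatTrans.mapHomologicalComplex β _).app K
  zero := by
    ext i
    exact congr_arg (fun γ => γ.app (K.X i)) h.zero

/-- The functoriality of `complexes` in the chain complex. -/
@[simps]
noncomputable def complexesMap (h : ShortExactOnProjectives α β) {K L : ChainComplex C ℕ}
    (φ : K ⟶ L) : h.complexes K ⟶ h.complexes L where
  τ₁ := (F₁.mapHomologicalComplex _).map φ
  τ₂ := (F₂.mapHomologicalComplex _).map φ
  τ₃ := (F₃.mapHomologicalComplex _).map φ
  comm₁₂ := (NatTrans.mapHomologicalComplex α _).naturality φ
  comm₂₃ := (NatTrans.mapHomologicalComplex β _).naturality φ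

lemma shortExact_complexes (h : ShortExactOnProjectives α β) {X : C}
    (P : ProjectiveResolution X) : (h.complexes P.complex).ShortExact :=
  HomologicalComplex.shortExact_of_degreewise_shortExact _ fun i => h.shortExact (P.complex.X i)

/-- The connecting morphism of the short exact sequence of complexes obtained from a projective
resolution. -/
noncomputable def homologyδ (h : ShortExactOnProjectives α β) {X : C}
    (P : ProjectiveResolution X) (n : ℕ) :
    ((F₃.mapHomologicalComplex _).obj P.complex).homology (n + 1) ⟶
      ((F₁.mapHomologicalComplex _).obj P.complex).homology n :=
  (h.shortExact_complexes P).δ (n + 1) n (ComplexShape.down_mk _ _ rfl)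

lemma homologyδ_naturality (h : ShortExactOnProjectives α β) {X Y : C}
    (P : ProjectiveResolution X) (Q : ProjectiveResolution Y) (φ : P.complex ⟶ Q.complex) (n : ℕ) :
    HomologicalComplex.homologyMap ((F₃.mapHomologicalComplex _).map φ) (n + 1) ≫
      h.homologyδ Q n = h.homologyδ P n ≫
        HomologicalComplex.homologyMap ((F₁.mapHomologicalComplex _).map φ) n :=
  (HomologicalComplex.HomologySequence.δ_naturality (h.complexesMap φ)
    (h.shortExact_complexes P) (h.shortExact_complexes Q) (n + 1) n
    (ComplexShape.down_mk _ _ rfl)).symm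

variable [HasProjectiveResolutions C]

/-- The connecting morphism between left derived functors. -/
noncomputable def δ (h : ShortExactOnProjectives α β) (n : ℕ) :
    F₃.leftDerived (n + 1) ⟶ F₁.leftDerived n where
  app X := (leftDerivedIsoHomology F₃ X (n + 1)).hom ≫
    h.homologyδ (projectiveResolution X) n ≫ (leftDerivedIsoHomology F₁ X n).inv
  naturality X Y f := by
    obtain ⟨φ, hφ⟩ := leftDerivedIsoHomology_naturality (D := D) f
    rw [← cancel_mono (leftDerivedIsoHomology F₁ Y n).hom]
    simp only [Category.assoc, Iso.inv_hom_id, Category.comp_id, hφ, Iso.inv_hom_id_assoc]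
    rw [← Category.assoc, hφ, Category.assoc, homologyδ_naturality]

lemma δ_app_comp_leftDerivedIsoHomology (h : ShortExactOnProjectives α β) (X : C) (n : ℕ) :
    (h.δ n).app X ≫ (leftDerivedIsoHomology F₁ X n).hom =
      (leftDerivedIsoHomology F₃ X (n + 1)).hom ≫ h.homologyδ (projectiveResolution X) n := by
  simp [δ]

lemma exact₂ (h : ShortExactOnProjectives α β) (X : C) (n : ℕ) : ∃ w,
    (ShortComplex.mk ((NatTrans.leftDerived α n).app X)
      ((NatTrans.leftDerived β n).app X) w).Exact :=
  exact_of_isos (leftDerivedIsoHomology F₁ X n) (leftDerivedIsoHomology F₂ X n)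
    (leftDerivedIsoHomology F₃ X n)
    (leftDerived_app_comp_leftDerivedIsoHomology _ _ _)
    (leftDerived_app_comp_leftDerivedIsoHomology _ _ _)
    ((h.shortExact_complexes (projectiveResolution X)).homology_exact₂ n)

lemma exact₁ (h : ShortExactOnProjectives α β) (X : C) (n : ℕ) : ∃ w,
    (ShortComplex.mk ((h.δ n).app X) ((NatTrans.leftDerived α n).app X) w).Exact :=
  exact_of_isos (leftDerivedIsoHomology F₃ X (n + 1)) (leftDerivedIsoHomology F₁ X n)
    (leftDerivedIsoHomology F₂ X n)
    (δ_app_comp_leftDerivedIsoHomology _ _ _)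
    (leftDerived_app_comp_leftDerivedIsoHomology _ _ _)
    ((h.shortExact_complexes (projectiveResolution X)).homology_exact₁ (n + 1) n
      (ComplexShape.down_mk _ _ rfl))

lemma exact₃ (h : ShortExactOnProjectives α β) (X : C) (n : ℕ) : ∃ w,
    (ShortComplex.mk ((NatTrans.leftDerived β (n + 1)).app X) ((h.δ n).app X) w).Exact :=
  exact_of_isos (leftDerivedIsoHomology F₂ X (n + 1)) (leftDerivedIsoHomology F₃ X (n + 1))
    (leftDerivedIsoHomology F₁ X n)
    (leftDerived_app_comp_leftDerivedIsoHomology _ _ _)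
    (δ_app_comp_leftDerivedIsoHomology _ _ _)
    ((h.shortExact_complexes (projectiveResolution X)).homology_exact₃ (n + 1) n
      (ComplexShape.down_mk _ _ rfl))

end Functor.ShortExactOnProjectives

lemma homologyMap_natTrans_id (ρ : 𝟭 D ⟶ 𝟭 D) {ι : Type*} {c : ComplexShape ι}
    (K : HomologicalComplex D c) (φ : K ⟶ K) (hφ : ∀ i, φ.f i = ρ.app (K.X i)) (n : ι) :
    HomologicalComplex.homologyMap φ n = ρ.app (K.homology n) := by
  have h : HomologicalComplex.cyclesMap φ n = ρ.app (K.cycles n) := by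
    rw [← cancel_mono (K.iCycles n), HomologicalComplex.cyclesMap_i, hφ]
    exact ρ.naturality (K.iCycles n)
  rw [← cancel_epi (K.homologyπ n), HomologicalComplex.homologyπ_naturality, h]
  exact (ρ.naturality (K.homologyπ n)).symm

lemma leftDerived_app_eq_natTrans_id [HasProjectiveResolutions C] (ρ : 𝟭 D ⟶ 𝟭 D) {F : C ⥤ D}
    [F.Additive] (α : F ⟶ F) (hα : ∀ X, α.app X = ρ.app (F.obj X)) (X : C) (n : ℕ) :
    (NatTrans.leftDerived α n).app X = ρ.app ((F.leftDerived n).obj X) := by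
  have h : ρ.app ((F.leftDerived n).obj X) ≫ (leftDerivedIsoHomology F X n).hom =
      (leftDerivedIsoHomology F X n).hom ≫ ρ.app _ :=
    (ρ.naturality _).symm
  refine (cancel_mono (leftDerivedIsoHomology F X n).hom).1 ?_
  rw [leftDerived_app_comp_leftDerivedIsoHomology,
    homologyMap_natTrans_id ρ _ _ fun i => hα _]
  exact h.symm

end CategoryTheory

namespace CategoryTheory

section

variable {R : Type u} [CommRing R]

lemma shortExactOnProjectives_linearYoneda {S : ShortComplex (ModuleCat.{u} R)} (hS : S.ShortExact) :
    Functor.ShortExactOnProjectives (C := ModuleCat.{u} R)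
      (NatTrans.rightOp ((linearYoneda R (ModuleCat.{u} R)).map S.g))
      (NatTrans.rightOp ((linearYoneda R (ModuleCat.{u} R)).map S.f)) where
  zero := by
    ext X
    apply Quiver.Hom.unop_inj
    ext (x : X ⟶ S.X₁)
    change (x ≫ S.f) ≫ S.g = 0
    simp
  shortExact P _ := by
    have w : ((linearYoneda R (ModuleCat.{u} R)).map S.f).app (op P) ≫
        ((linearYoneda R (ModuleCat.{u} R)).map S.g).app (op P) = 0 := by
      ext (x : P ⟶ S.X₁)
      change (x ≫ S.f) ≫ S.g = 0
      simp
    have h : (ShortComplex.mk _ _ w).ShortExact := by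
      have := hS.mono_f
      have := hS.epi_g
      refine @ShortComplex.ShortExact.mk _ _ _ _ ?_ ?_ ?_
      · rw [ShortComplex.moduleCat_exact_iff]
        intro (x : P ⟶ S.X₂) hx
        exact ⟨hS.exact.lift x hx, hS.exact.lift_f x hx⟩
      · rw [ModuleCat.mono_iff_injective]
        intro (x : P ⟶ S.X₁) y hxy
        exact (cancel_mono S.f).1 hxy
      · rw [ModuleCat.epi_iff_surjective]
        intro (x : P ⟶ S.X₃)
        exact ⟨Projective.factorThru x S.g, Projective.factorThru_comp x S.g⟩
    exact h.op

/-- The connecting morphism of the long exact sequence of `Ext` in the second variable. -/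
noncomputable def extδ {S : ShortComplex (ModuleCat.{u} R)} (hS : S.ShortExact) (n : ℕ) :
    (Ext R (ModuleCat.{u} R) n).flip.obj S.X₃ ⟶ (Ext R (ModuleCat.{u} R) (n + 1)).flip.obj S.X₁ :=
  NatTrans.leftOp ((shortExactOnProjectives_linearYoneda hS).δ n)

lemma exact_unop_of_exact {A B C : (ModuleCat.{u} R)ᵒᵖ} {f : A ⟶ B} {g : B ⟶ C}
    (h : ∃ w, (ShortComplex.mk f g w).Exact) : ∃ w, (ShortComplex.mk g.unop f.unop w).Exact := by
  obtain ⟨w, h⟩ := h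
  exact ⟨_, h.unop⟩

lemma ext_exact₁ {S : ShortComplex (ModuleCat.{u} R)} (hS : S.ShortExact) (n : ℕ)
    (X : (ModuleCat.{u} R)ᵒᵖ) : ∃ w,
    (ShortComplex.mk ((extδ hS n).app X)
      (((Ext R (ModuleCat.{u} R) (n + 1)).flip.map S.f).app X) w).Exact :=
  exact_unop_of_exact ((shortExactOnProjectives_linearYoneda hS).exact₃ X.unop n)

lemma ext_exact₂ {S : ShortComplex (ModuleCat.{u} R)} (hS : S.ShortExact) (n : ℕ)
    (X : (ModuleCat.{u} R)ᵒᵖ) : ∃ w,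
    (ShortComplex.mk (((Ext R (ModuleCat.{u} R) n).flip.map S.f).app X)
      (((Ext R (ModuleCat.{u} R) n).flip.map S.g).app X) w).Exact :=
  exact_unop_of_exact ((shortExactOnProjectives_linearYoneda hS).exact₂ X.unop n)

lemma ext_exact₃ {S : ShortComplex (ModuleCat.{u} R)} (hS : S.ShortExact) (n : ℕ)
    (X : (ModuleCat.{u} R)ᵒᵖ) : ∃ w,
    (ShortComplex.mk (((Ext R (ModuleCat.{u} R) n).flip.map S.g).app X)
      ((extδ hS n).app X) w).Exact :=
  exact_unop_of_exact ((shortExactOnProjectives_linearYoneda hS).exact₁ X.unop n)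

/-- Multiplication by `r` as an endomorphism of the identity functor of the opposite of the
category of modules. -/
def smulNatTransOp (r : R) : 𝟭 (ModuleCat.{u} R)ᵒᵖ ⟶ 𝟭 (ModuleCat.{u} R)ᵒᵖ where
  app X := (r • 𝟙 X.unop).op
  naturality X Y f := by
    apply Quiver.Hom.unop_inj
    simp

lemma ext_map_smul_id (r : R) (n : ℕ) (X : (ModuleCat.{u} R)ᵒᵖ) (M : ModuleCat.{u} R) :
    ((Ext R (ModuleCat.{u} R) n).obj X).map (r • 𝟙 M) = r • 𝟙 _ := by
  apply Quiver.Hom.op_inj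
  refine leftDerived_app_eq_natTrans_id (smulNatTransOp r)
    (NatTrans.rightOp ((linearYoneda R (ModuleCat.{u} R)).map (r • 𝟙 M))) (fun Y => ?_) X.unop n
  apply Quiver.Hom.unop_inj
  ext (x : Y ⟶ M)
  change x ≫ (r • 𝟙 M) = r • x
  simp

lemma isZero_ext_succ_of_injective (n : ℕ) (X : (ModuleCat.{u} R)ᵒᵖ) (E : ModuleCat.{u} R)
    [Injective E] : IsZero (((Ext R (ModuleCat.{u} R) (n + 1)).obj X).obj E) := by
  refine IsZero.of_iso ?_ ((projectiveResolution X.unop).isoExt (n + 1) E)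
  rw [← HomologicalComplex.exactAt_iff_isZero_homology,
    HomologicalComplex.exactAt_iff' _ n (n + 1) (n + 2) (by simp) (by simp),
    ShortComplex.moduleCat_exact_iff]
  intro (x : (projectiveResolution X.unop).complex.X (n + 1) ⟶ E) hx
  have hP := (projectiveResolution X.unop).complex_exactAt_succ n
  rw [HomologicalComplex.exactAt_iff' _ (n + 2) (n + 1) n (by simp) (by simp)] at hP
  exact ⟨hP.descToInjective x hx, hP.comp_descToInjective x hx⟩

end

end CategoryTheory

namespace CategoryTheory

section

variable {C D : Type*} [Category* C] [Category* D] [Abelian C] [Abelian D]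

lemma opcyclesMap_comp_fromLeftDerivedZero' {F G : C ⥤ D} [F.Additive] [G.Additive]
    (α : F ⟶ G) {X : C} (P : ProjectiveResolution X) :
    HomologicalComplex.opcyclesMap ((NatTrans.mapHomologicalComplex α _).app P.complex) 0 ≫
      P.fromLeftDerivedZero' G = P.fromLeftDerivedZero' F ≫ α.app X := by
  rw [← cancel_epi (HomologicalComplex.pOpcycles _ _),
    HomologicalComplex.p_opcyclesMap_assoc]
  erw [ProjectiveResolution.pOpcycles_comp_fromLeftDerivedZero',
    ProjectiveResolution.pOpcycles_comp_fromLeftDerivedZero'_assoc]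
  exact (α.naturality _).symm

variable [HasProjectiveResolutions C]

lemma fromLeftDerivedZero_app_eq (F : C ⥤ D) [F.Additive] (X : C) :
    F.fromLeftDerivedZero.app X = (leftDerivedIsoHomology F X 0).hom ≫
      ((F.mapHomologicalComplex _).obj (projectiveResolution X).complex).homologyι 0 ≫
        (projectiveResolution X).fromLeftDerivedZero' F :=
  (projectiveResolution X).fromLeftDerivedZero_eq F

lemma leftDerived_zero_comp_fromLeftDerivedZero {F G : C ⥤ D} [F.Additive] [G.Additive]
    (α : F ⟶ G) :
    NatTrans.leftDerived α 0 ≫ G.fromLeftDerivedZero = F.fromLeftDerivedZero ≫ α := by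
  ext X
  rw [NatTrans.comp_app, NatTrans.comp_app, fromLeftDerivedZero_app_eq,
    fromLeftDerivedZero_app_eq, ← Category.assoc, leftDerived_app_comp_leftDerivedIsoHomology]
  simp only [Category.assoc]
  rw [← opcyclesMap_comp_fromLeftDerivedZero' α,
    HomologicalComplex.homologyι_naturality_assoc]

end

section

variable {R : Type u} [CommRing R]

instance (Y : ModuleCat.{u} R) : PreservesLimits ((linearYoneda R (ModuleCat.{u} R)).obj Y) := by
  have : PreservesLimits ((linearYoneda R (ModuleCat.{u} R)).obj Y ⋙ forget _) :=
    inferInstanceAs (PreservesLimits (yoneda.obj Y))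
  exact preservesLimits_of_reflects_of_preserves _ (forget _)

instance (Y : ModuleCat.{u} R) :
    PreservesFiniteColimits ((linearYoneda R (ModuleCat.{u} R)).obj Y).rightOp :=
  preservesFiniteColimits_rightOp _

/-- The identification of `Hom(X, Y)` with `Ext^0(X, Y)`. -/
noncomputable def homToExtZero (Y : ModuleCat.{u} R) :
    (linearYoneda R (ModuleCat.{u} R)).obj Y ⟶ (Ext R (ModuleCat.{u} R) 0).flip.obj Y :=
  NatTrans.leftOp ((linearYoneda R (ModuleCat.{u} R)).obj Y).rightOp.fromLeftDerivedZero

instance (Y : ModuleCat.{u} R) (X : (ModuleCat.{u} R)ᵒᵖ) : IsIso ((homToExtZero Y).app X) := by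
  change IsIso (((linearYoneda R (ModuleCat.{u} R)).obj Y).rightOp.fromLeftDerivedZero.app
    X.unop).unop
  infer_instance

instance (Y : ModuleCat.{u} R) : IsIso (homToExtZero Y) :=
  NatIso.isIso_of_isIso_app _

lemma homToExtZero_naturality {Y Z : ModuleCat.{u} R} (f : Y ⟶ Z) :
    homToExtZero Y ≫ (Ext R (ModuleCat.{u} R) 0).flip.map f =
      (linearYoneda R (ModuleCat.{u} R)).map f ≫ homToExtZero Z := by
  ext1
  ext1 X
  exact congr_arg (fun α => (α.app X.unop).unop) (leftDerived_zero_comp_fromLeftDerivedZero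
    (NatTrans.rightOp ((linearYoneda R (ModuleCat.{u} R)).map f)))

end

noncomputable section

variable {R : Type u} [CommRing R]

/-- The inverse system of quotients of `R` by the powers of an ideal. -/
abbrev quotientPowers (I : Ideal R) : ℕᵒᵖᵒᵖ ⥤ (ModuleCat.{u} R)ᵒᵖ :=
  (localCohomology.ringModIdeals (localCohomology.idealPowersDiagram I)).op

/-- Local cohomology of `M`, as a colimit in the category of modules. -/
def localCohomologyIsoColim (I : Ideal R) (n : ℕ) : localCohomology I n ≅
    (Ext R (ModuleCat.{u} R) n).flip ⋙
      (Functor.whiskeringLeft _ _ _).obj (quotientPowers I) ⋙ colim :=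
  colimitIsoFlipCompColim _

section

variable {J : Type} [SmallCategory J] [IsFiltered J] {A B C : J ⥤ ModuleCat.{u} R}

instance : PreservesColimit A (forget (ModuleCat.{u} R)) := by
  have : PreservesFilteredColimitsOfSize.{0, 0} (forget (ModuleCat.{u} R)) :=
    preservesFilteredColimitsOfSize_shrink.{0, u, 0, u} _
  infer_instance

lemma exists_colimit_rep (x : (colimit A : ModuleCat.{u} R)) : ∃ j a, colimit.ι A j a = x :=
  Concrete.colimit_exists_rep A x

lemma exists_map_eq_zero_of_colimit_ι_eq_zero {j : J} {a : A.obj j}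
    (h : colimit.ι A j a = 0) : ∃ (k : J) (f : j ⟶ k), A.map f a = 0 := by
  obtain ⟨k, f, g, h⟩ := Concrete.colimit_exists_of_rep_eq A a (0 : A.obj j) (by rw [h]; simp)
  exact ⟨k, f, by rw [h]; simp⟩

lemma exact_colim_map {f : A ⟶ B} {g : B ⟶ C}
    (h : ∀ j, ∃ w, (ShortComplex.mk (f.app j) (g.app j) w).Exact) :
    Function.Exact (colim.map f) (colim.map g) := by
  intro y
  constructor
  · intro hy
    obtain ⟨j, b, rfl⟩ := exists_colimit_rep y
    have e : colimit.ι C j (g.app j b) = 0 := by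
      rw [← hy, ← ModuleCat.comp_apply, ← ModuleCat.comp_apply]
      exact congr_arg (fun φ => ModuleCat.Hom.hom φ b) (ι_colimMap g j).symm
    obtain ⟨k, φ, hk⟩ := exists_map_eq_zero_of_colimit_ι_eq_zero e
    obtain ⟨w, hw⟩ := h k
    rw [ShortComplex.moduleCat_exact_iff] at hw
    obtain ⟨a, ha⟩ := hw (B.map φ b) (by
      rw [← hk]
      exact congr_arg (fun ψ => ModuleCat.Hom.hom ψ b) (g.naturality φ))
    refine ⟨colimit.ι A k a, ?_⟩
    have e₁ : colim.map f (colimit.ι A k a) = colimit.ι B k (f.app k a) :=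
      congr_arg (fun ψ => ModuleCat.Hom.hom ψ a) (ι_colimMap f k)
    have e₂ : colimit.ι B k (B.map φ b) = colimit.ι B j b :=
      congr_arg (fun ψ => ModuleCat.Hom.hom ψ b) (colimit.w B φ)
    rw [e₁, ← e₂]
    exact congr_arg _ ha
  · rintro ⟨x, rfl⟩
    have w : f ≫ g = 0 := by
      ext1
      ext1 j
      exact (h j).1
    rw [← ModuleCat.comp_apply, ← Functor.map_comp, w]
    obtain ⟨j, a, rfl⟩ := exists_colimit_rep x
    have e : colim.map (0 : A ⟶ C) (colimit.ι A j a) = colimit.ι C j ((0 : A ⟶ C).app j a) :=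
      congr_arg (fun ψ => ModuleCat.Hom.hom ψ a) (ι_colimMap (0 : A ⟶ C) j)
    rw [e]
    exact map_zero (colimit.ι C j).hom

end

end

end CategoryTheory

noncomputable section

variable {R : Type u} [CommRing R]

namespace CategoryTheory

variable {S : ShortComplex (ModuleCat.{u} R)}

lemma localCohomology_exact (hS : S.ShortExact) (I : Ideal R) (n : ℕ) :
    Function.Exact ((localCohomology I n).map S.f) ((localCohomology I n).map S.g) := by
  let e (X) := ((localCohomologyIsoColim I n).app X).toLinearEquiv
  refine (Function.Exact.iff_of_ladder_linearEquiv (e₁ := e S.X₁) (e₂ := e S.X₂)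
    (e₃ := e S.X₃) (f₁₂ := ((localCohomology I n).map S.f).hom)
    (f₂₃ := ((localCohomology I n).map S.g).hom) ?_ ?_).1
    (exact_colim_map
      (f := Functor.whiskerLeft (quotientPowers I) ((Ext R (ModuleCat.{u} R) n).flip.map S.f))
      (g := Functor.whiskerLeft (quotientPowers I) ((Ext R (ModuleCat.{u} R) n).flip.map S.g))
      (fun j => ext_exact₂ hS n _))
  · exact congr_arg ModuleCat.Hom.hom ((localCohomologyIsoColim I n).hom.naturality S.f).symm
  · exact congr_arg ModuleCat.Hom.hom ((localCohomologyIsoColim I n).hom.naturality S.g).symm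

/-- The connecting homomorphism of the long exact sequence of local cohomology. -/
def localCohomologyδ (hS : S.ShortExact) (I : Ideal R) (n : ℕ) :
    (localCohomology I n).obj S.X₃ ⟶ (localCohomology I (n + 1)).obj S.X₁ :=
  (localCohomologyIsoColim I n).hom.app S.X₃ ≫
    colim.map (Functor.whiskerLeft (quotientPowers I) (extδ hS n)) ≫
      (localCohomologyIsoColim I (n + 1)).inv.app S.X₁

lemma localCohomologyδ_comp (hS : S.ShortExact) (I : Ideal R) (n : ℕ) :
    localCohomologyδ hS I n ≫ (localCohomologyIsoColim I (n + 1)).hom.app S.X₁ =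
      (localCohomologyIsoColim I n).hom.app S.X₃ ≫
        colim.map (Functor.whiskerLeft (quotientPowers I) (extδ hS n)) := by
  simp [localCohomologyδ]

lemma localCohomology_exact_map_δ (hS : S.ShortExact) (I : Ideal R) (n : ℕ) :
    Function.Exact ((localCohomology I n).map S.g) (localCohomologyδ hS I n) := by
  let e (n X) := ((localCohomologyIsoColim I n).app X).toLinearEquiv
  refine (Function.Exact.iff_of_ladder_linearEquiv (e₁ := e n S.X₂) (e₂ := e n S.X₃)
    (e₃ := e (n + 1) S.X₁) (f₁₂ := ((localCohomology I n).map S.g).hom)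
    (f₂₃ := (localCohomologyδ hS I n).hom) ?_ ?_).1
    (exact_colim_map
      (f := Functor.whiskerLeft (quotientPowers I) ((Ext R (ModuleCat.{u} R) n).flip.map S.g))
      (g := Functor.whiskerLeft (quotientPowers I) (extδ hS n))
      (fun j => ext_exact₃ hS n _))
  · exact congr_arg ModuleCat.Hom.hom ((localCohomologyIsoColim I n).hom.naturality S.g).symm
  · exact congr_arg ModuleCat.Hom.hom (localCohomologyδ_comp hS I n).symm

lemma localCohomology_exact_δ_map (hS : S.ShortExact) (I : Ideal R) (n : ℕ) :
    Function.Exact (localCohomologyδ hS I n) ((localCohomology I (n + 1)).map S.f) := by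
  let e (n X) := ((localCohomologyIsoColim I n).app X).toLinearEquiv
  refine (Function.Exact.iff_of_ladder_linearEquiv (e₁ := e n S.X₃) (e₂ := e (n + 1) S.X₁)
    (e₃ := e (n + 1) S.X₂) (f₁₂ := (localCohomologyδ hS I n).hom)
    (f₂₃ := ((localCohomology I (n + 1)).map S.f).hom) ?_ ?_).1
    (exact_colim_map
      (f := Functor.whiskerLeft (quotientPowers I) (extδ hS n))
      (g := Functor.whiskerLeft (quotientPowers I)
        ((Ext R (ModuleCat.{u} R) (n + 1)).flip.map S.f))
      (fun j => ext_exact₁ hS n _))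
  · exact congr_arg ModuleCat.Hom.hom (localCohomologyδ_comp hS I n).symm
  · exact congr_arg ModuleCat.Hom.hom
      ((localCohomologyIsoColim I (n + 1)).hom.naturality S.f).symm

lemma subsingleton_localCohomology_succ_of_injective (I : Ideal R) (n : ℕ) (E : ModuleCat.{u} R)
    [Injective E] : Subsingleton ((localCohomology I (n + 1)).obj E) := by
  refine ((localCohomologyIsoColim I (n + 1)).app E).toLinearEquiv.toEquiv.subsingleton_congr.2
    (subsingleton_of_forall_eq 0 fun x => ?_)
  obtain ⟨j, a, rfl⟩ := exists_colimit_rep (A := quotientPowers I ⋙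
    (Ext R (ModuleCat.{u} R) (n + 1)).flip.obj E) x
  have := ModuleCat.subsingleton_of_isZero
    (isZero_ext_succ_of_injective n ((quotientPowers I).obj j) E)
  rw [show a = 0 from Subsingleton.elim (α := ((Ext R (ModuleCat.{u} R) (n + 1)).obj
    ((quotientPowers I).obj j)).obj E) a 0]
  exact map_zero (colimit.ι (quotientPowers I ⋙
    (Ext R (ModuleCat.{u} R) (n + 1)).flip.obj E) j).hom

lemma localCohomology_map_smul_id (I : Ideal R) (n : ℕ) (M : ModuleCat.{u} R) (r : R) :
    (localCohomology I n).map (r • 𝟙 M) = r • 𝟙 _ := by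
  rw [← Iso.cancel_iso_hom_right _ _ ((localCohomologyIsoColim I n).app M), Iso.app_hom,
    NatTrans.naturality, Linear.smul_comp, Category.id_comp]
  have : ((Ext R (ModuleCat.{u} R) n).flip ⋙
      (Functor.whiskeringLeft _ _ _).obj (quotientPowers I) ⋙ colim).map (r • 𝟙 M) = r • 𝟙 _ := by
    refine colimit.hom_ext fun j => ?_
    refine (ι_colimMap _ j).trans ?_
    rw [Linear.comp_smul]
    refine (congr_arg (· ≫ _) (ext_map_smul_id r n ((quotientPowers I).obj j) M)).trans ?_
    rw [Linear.smul_comp]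
    exact congr_arg _ ((Category.id_comp _).trans (Category.comp_id _).symm)
  rw [this, Linear.comp_smul, Category.comp_id]

end CategoryTheory

end

/-- The submodule of elements of `M` annihilated by some power of the ideal `I`. -/
def Ideal.powTorsion {R : Type*} [CommRing R] (I : Ideal R) (M : Type*) [AddCommGroup M]
    [Module R M] : Submodule R M where
  carrier := {m | ∃ k : ℕ, ∀ a ∈ I ^ k, a • m = 0}
  zero_mem' := ⟨0, fun a _ => smul_zero a⟩
  add_mem' := by
    rintro x y ⟨k, hk⟩ ⟨l, hl⟩
    refine ⟨k + l, fun a ha => ?_⟩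
    rw [smul_add, hk a (Ideal.pow_le_pow_right (Nat.le_add_right k l) ha),
      hl a (Ideal.pow_le_pow_right (Nat.le_add_left l k) ha), add_zero]
  smul_mem' := by
    rintro c x ⟨k, hk⟩
    exact ⟨k, fun a ha => by rw [smul_comm, hk a ha, smul_zero]⟩

noncomputable section

variable {R : Type u} [CommRing R]

namespace CategoryTheory

/-- Evaluation at `1` of a homomorphism `R ⧸ I ^ k ⟶ Y`. -/
def evalOne (I : Ideal R) (Y : ModuleCat.{u} R) (j : ℕᵒᵖᵒᵖ) :
    ((linearYoneda R (ModuleCat.{u} R)).obj Y).obj ((quotientPowers I).obj j) ⟶ Y :=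
  ModuleCat.ofHom
    { toFun := fun (f : ((quotientPowers I).obj j).unop ⟶ Y) =>
        f.hom (Ideal.Quotient.mk (I ^ j.unop.unop) 1)
      map_add' := fun _ _ => rfl
      map_smul' := fun _ _ => rfl }

/-- The comparison from `colim Hom(R ⧸ I ^ k, Y)` to `Y`. -/
def colimHomToModule (I : Ideal R) (Y : ModuleCat.{u} R) :
    colimit (quotientPowers I ⋙ (linearYoneda R (ModuleCat.{u} R)).obj Y) ⟶ Y :=
  colimit.desc _
    { pt := Y
      ι :=
        { app := evalOne I Y
          naturality := fun _ _ _ => rfl } }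

lemma ι_colimHomToModule (I : Ideal R) (Y : ModuleCat.{u} R) (j : ℕᵒᵖᵒᵖ) :
    colimit.ι (quotientPowers I ⋙ (linearYoneda R (ModuleCat.{u} R)).obj Y) j ≫
      colimHomToModule I Y = evalOne I Y j :=
  colimit.ι_desc _ _

lemma colimHomToModule_naturality (I : Ideal R) {Y Z : ModuleCat.{u} R} (f : Y ⟶ Z) :
    colim.map (Functor.whiskerLeft (quotientPowers I) ((linearYoneda R (ModuleCat.{u} R)).map f)) ≫
      colimHomToModule I Z = colimHomToModule I Y ≫ f := by
  refine colimit.hom_ext fun j => ?_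
  rw [reassoc_of% (ι_colimHomToModule I Y j)]
  exact (ι_colimMap_assoc _ _ _).trans (congr_arg _ (ι_colimHomToModule I Z j))

lemma evalOne_injective (I : Ideal R) (Y : ModuleCat.{u} R) (j : ℕᵒᵖᵒᵖ) :
    Function.Injective (evalOne I Y j) := by
  intro (f : ((quotientPowers I).obj j).unop ⟶ Y) g h
  refine ModuleCat.hom_ext (LinearMap.ext fun x => ?_)
  obtain ⟨r, rfl⟩ := Ideal.Quotient.mk_surjective (I := I ^ j.unop.unop) x
  have e : Ideal.Quotient.mk (I ^ j.unop.unop) r = r • Ideal.Quotient.mk (I ^ j.unop.unop) 1 := by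
    rw [← Ideal.Quotient.mk_eq_mk, ← Ideal.Quotient.mk_eq_mk, ← Submodule.Quotient.mk_smul]
    simp
  rw [e]
  exact (f.hom.map_smul _ _).trans ((congr_arg (r • ·) h).trans (g.hom.map_smul _ _).symm)

lemma evalOne_mem (I : Ideal R) (Y : ModuleCat.{u} R) (j : ℕᵒᵖᵒᵖ)
    (f : ((quotientPowers I).obj j).unop ⟶ Y) : evalOne I Y j f ∈ I.powTorsion Y := by
  refine ⟨j.unop.unop, fun a ha => (f.hom.map_smul a _).symm.trans ?_⟩
  refine Eq.trans (congr_arg f.hom ?_) (map_zero f.hom)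
  change Submodule.Quotient.mk (a • 1) = _
  rw [smul_eq_mul, mul_one]
  exact (Submodule.Quotient.mk_eq_zero _).2 ha

lemma exists_evalOne_eq {I : Ideal R} {Y : ModuleCat.{u} R} {y : Y} (hy : y ∈ I.powTorsion Y) :
    ∃ (j : ℕᵒᵖᵒᵖ) (f : ((quotientPowers I).obj j).unop ⟶ Y), evalOne I Y j f = y := by
  obtain ⟨k, hk⟩ := hy
  refine ⟨op (op k), ModuleCat.ofHom (Submodule.liftQ (I ^ k) (LinearMap.toSpanSingleton R Y y)
    fun a ha => hk a ha), ?_⟩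
  exact one_smul R y

lemma colimHomToModule_injective (I : Ideal R) (Y : ModuleCat.{u} R) :
    Function.Injective (colimHomToModule I Y) := by
  refine (injective_iff_map_eq_zero (colimHomToModule I Y).hom).2 fun x hx => ?_
  obtain ⟨j, f, rfl⟩ := exists_colimit_rep
    (A := quotientPowers I ⋙ (linearYoneda R (ModuleCat.{u} R)).obj Y) x
  have h := (congr_arg (fun φ => ModuleCat.Hom.hom φ f) (ι_colimHomToModule I Y j)).symm.trans hx
  have hf : f = 0 := evalOne_injective I Y j (h.trans (map_zero (evalOne I Y j).hom).symm)
  rw [hf]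
  exact map_zero (colimit.ι (quotientPowers I ⋙ (linearYoneda R (ModuleCat.{u} R)).obj Y) j).hom

lemma range_colimHomToModule (I : Ideal R) (Y : ModuleCat.{u} R) :
    LinearMap.range (colimHomToModule I Y).hom = I.powTorsion Y := by
  ext y
  constructor
  · rintro ⟨x, rfl⟩
    obtain ⟨j, f, rfl⟩ := exists_colimit_rep
      (A := quotientPowers I ⋙ (linearYoneda R (ModuleCat.{u} R)).obj Y) x
    have h := congr_arg (fun φ => ModuleCat.Hom.hom φ f) (ι_colimHomToModule I Y j)
    exact (congr_arg (· ∈ I.powTorsion Y) h).mpr (evalOne_mem I Y j f)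
  · intro hy
    obtain ⟨j, f, rfl⟩ := exists_evalOne_eq hy
    exact ⟨colimit.ι (quotientPowers I ⋙ (linearYoneda R (ModuleCat.{u} R)).obj Y) j f,
      congr_arg (fun φ => ModuleCat.Hom.hom φ f) (ι_colimHomToModule I Y j)⟩

/-- The isomorphism between `colim Hom(R ⧸ I ^ k, Y)` and `H^0_I(Y)`. -/
def colimHomIso (I : Ideal R) (Y : ModuleCat.{u} R) :
    colim.obj (quotientPowers I ⋙ (linearYoneda R (ModuleCat.{u} R)).obj Y) ≅
      (localCohomology I 0).obj Y :=
  colim.mapIso (Functor.isoWhiskerLeft (quotientPowers I) (asIso (homToExtZero Y))) ≪≫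
    ((localCohomologyIsoColim I 0).app Y).symm

lemma colimHomIso_hom_naturality (I : Ideal R) {Y Z : ModuleCat.{u} R} (f : Y ⟶ Z) :
    colim.map (Functor.whiskerLeft (quotientPowers I) ((linearYoneda R (ModuleCat.{u} R)).map f)) ≫
      (colimHomIso I Z).hom = (colimHomIso I Y).hom ≫ (localCohomology I 0).map f := by
  have h := (localCohomologyIsoColim I 0).inv.naturality f
  have h' := congr_arg (fun φ => colim.map (Functor.whiskerLeft (quotientPowers I) φ))
    (homToExtZero_naturality f)
  simp only [Functor.whiskerLeft_comp, Functor.map_comp] at h'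
  simp only [colimHomIso, Iso.trans_hom, Iso.symm_hom, Iso.app_inv, Functor.mapIso_hom,
    Functor.isoWhiskerLeft_hom, asIso_hom, Category.assoc]
  rw [← h, ← Category.assoc]
  erw [← h']
  rfl

/-- The natural map from `H^0_I(Y)` to `Y`. -/
def localCohomologyZeroToModule (I : Ideal R) (Y : ModuleCat.{u} R) :
    (localCohomology I 0).obj Y ⟶ Y :=
  (colimHomIso I Y).inv ≫ colimHomToModule I Y

lemma localCohomologyZeroToModule_naturality (I : Ideal R) {Y Z : ModuleCat.{u} R} (f : Y ⟶ Z) :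
    (localCohomology I 0).map f ≫ localCohomologyZeroToModule I Z =
      localCohomologyZeroToModule I Y ≫ f := by
  rw [localCohomologyZeroToModule, localCohomologyZeroToModule, Category.assoc,
    ← colimHomToModule_naturality, Iso.eq_inv_comp, ← Category.assoc, ← colimHomIso_hom_naturality]
  simp

lemma localCohomologyZeroToModule_injective (I : Ideal R) (Y : ModuleCat.{u} R) :
    Function.Injective (localCohomologyZeroToModule I Y) :=
  (colimHomToModule_injective I Y).comp (colimHomIso I Y).symm.toLinearEquiv.injective

lemma range_localCohomologyZeroToModule (I : Ideal R) (Y : ModuleCat.{u} R) :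
    LinearMap.range (localCohomologyZeroToModule I Y).hom = I.powTorsion Y := by
  rw [← range_colimHomToModule]
  exact LinearMap.range_comp_of_range_eq_top _ (colimHomIso I Y).symm.toLinearEquiv.range

end CategoryTheory

end

noncomputable section

variable {R : Type u} [CommRing R]

/-- The local cohomology module `H^n_I(M)` of an unbundled module `M`. -/
abbrev LocalCohomology (I : Ideal R) (n : ℕ) (M : Type u) [AddCommGroup M] [Module R M] :
    Type u :=
  (localCohomology I n).obj (ModuleCat.of R M)

namespace LocalCohomology

variable {M N P : Type u} [AddCommGroup M] [Module R M] [AddCommGroup N] [Module R N]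
  [AddCommGroup P] [Module R P] (I : Ideal R) (n : ℕ)

/-- The map on local cohomology induced by a linear map. -/
def map (f : M →ₗ[R] N) : LocalCohomology I n M →ₗ[R] LocalCohomology I n N :=
  ((localCohomology I n).map (ModuleCat.ofHom f)).hom

lemma map_id : map I n (LinearMap.id : M →ₗ[R] M) = LinearMap.id :=
  congr_arg ModuleCat.Hom.hom ((localCohomology I n).map_id (ModuleCat.of R M))

lemma map_comp (g : N →ₗ[R] P) (f : M →ₗ[R] N) : map I n (g ∘ₗ f) = map I n g ∘ₗ map I n f :=
  congr_arg ModuleCat.Hom.hom ((localCohomology I n).map_comp (ModuleCat.ofHom f)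
    (ModuleCat.ofHom g))

lemma map_comp_apply (g : N →ₗ[R] P) (f : M →ₗ[R] N) (z : LocalCohomology I n M) :
    map I n (g ∘ₗ f) z = map I n g (map I n f z) := by
  rw [map_comp, LinearMap.comp_apply]

lemma map_smul_id (r : R) (z : LocalCohomology I n M) :
    map I n (r • (LinearMap.id : M →ₗ[R] M)) z = r • z :=
  congr_arg (fun φ => ModuleCat.Hom.hom φ z)
    (localCohomology_map_smul_id I n (ModuleCat.of R M) r)

section exact

variable {f : M →ₗ[R] N} {g : N →ₗ[R] P}

lemma shortExact (hf : Function.Injective f) (hfg : Function.Exact f g)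
    (hg : Function.Surjective g) :
    (ShortComplex.mk (ModuleCat.ofHom f) (ModuleCat.ofHom g)
      (ModuleCat.hom_ext hfg.linearMap_comp_eq_zero)).ShortExact :=
  ModuleCat.shortComplex_shortExact _ hfg hf hg

/-- The connecting homomorphism of local cohomology. -/
def δ (hf : Function.Injective f) (hfg : Function.Exact f g) (hg : Function.Surjective g) :
    LocalCohomology I n P →ₗ[R] LocalCohomology I (n + 1) M :=
  (localCohomologyδ (shortExact hf hfg hg) I n).hom

variable (hf : Function.Injective f) (hfg : Function.Exact f g) (hg : Function.Surjective g)

lemma exact_map_map (hf : Function.Injective f) (hfg : Function.Exact f g)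
    (hg : Function.Surjective g) : Function.Exact (map I n f) (map I n g) :=
  localCohomology_exact (shortExact hf hfg hg) I n

lemma exact_map_δ : Function.Exact (map I n g) (δ I n hf hfg hg) :=
  localCohomology_exact_map_δ (shortExact hf hfg hg) I n

lemma exact_δ_map : Function.Exact (δ I n hf hfg hg) (map I (n + 1) f) :=
  localCohomology_exact_δ_map (shortExact hf hfg hg) I n

end exact

lemma subsingleton_succ_of_injective (E : Type u) [AddCommGroup E] [Module R E]
    (hE : Module.Injective R E) : Subsingleton (LocalCohomology I (n + 1) E) := by
  have := Module.injective_object_of_injective_module R E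
  exact subsingleton_localCohomology_succ_of_injective I n _

/-- The identification of `H^0_I(M)` with the `I`-power torsion of `M`. -/
def zeroEquiv (M : Type u) [AddCommGroup M] [Module R M] :
    LocalCohomology I 0 M ≃ₗ[R] I.powTorsion M :=
  LinearEquiv.ofInjective _ (localCohomologyZeroToModule_injective I (ModuleCat.of R M)) ≪≫ₗ
    LinearEquiv.ofEq _ _ (range_localCohomologyZeroToModule I _)

lemma coe_zeroEquiv_map (f : M →ₗ[R] N) (z : LocalCohomology I 0 M) :
    (zeroEquiv I N (map I 0 f z) : N) = f (zeroEquiv I M z) :=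
  congr_arg (fun φ => ModuleCat.Hom.hom φ z)
    (localCohomologyZeroToModule_naturality I (ModuleCat.ofHom f))

lemma exists_injective_embedding (M : Type u) [AddCommGroup M] [Module R M] :
    ∃ (E : ModuleCat.{u} R) (f : M →ₗ[R] E), Module.Injective R E ∧ Function.Injective f := by
  obtain ⟨⟨E, hE, f, hf⟩⟩ :=
    EnoughInjectives.presentation (C := ModuleCat.{u} R) (ModuleCat.of R M)
  have : Injective (ModuleCat.of R E) := hE
  exact ⟨E, f.hom, Module.injective_module_of_injective_object R E,
    (ModuleCat.mono_iff_injective f).1 hf⟩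

lemma δ_surjective_of_injective {f : M →ₗ[R] N} {g : N →ₗ[R] P} (hf : Function.Injective f)
    (hfg : Function.Exact f g) (hg : Function.Surjective g) (hN : Module.Injective R N) :
    Function.Surjective (δ I n hf hfg hg) := by
  have := subsingleton_succ_of_injective I n N hN
  exact fun z => (exact_δ_map I n hf hfg hg z).1 (Subsingleton.elim _ _)

lemma δ_injective_of_injective {f : M →ₗ[R] N} {g : N →ₗ[R] P} (hf : Function.Injective f)
    (hfg : Function.Exact f g) (hg : Function.Surjective g) (hN : Module.Injective R N) :
    Function.Injective (δ I (n + 1) hf hfg hg) := by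
  have := subsingleton_succ_of_injective I n N hN
  refine (injective_iff_map_eq_zero _).2 fun z hz => ?_
  obtain ⟨y, rfl⟩ := (exact_map_δ I (n + 1) hf hfg hg z).1 hz
  rw [Subsingleton.elim y 0, map_zero]

/-- Local cohomology as a quotient of torsion submodules, simultaneously for all ideals. -/
lemma exists_powTorsion_presentation (n : ℕ) (M : Type u) [AddCommGroup M] [Module R M] :
    ∃ (E N : ModuleCat.{u} R) (g : E →ₗ[R] N), Module.Injective R E ∧ ∀ I : Ideal R,
      ∃ φ : I.powTorsion N →ₗ[R] LocalCohomology I n M, Function.Surjective φ ∧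
        ∀ z, φ z = 0 ↔ ∃ y ∈ I.powTorsion E, g y = z := by
  induction n generalizing M with
  | zero =>
    refine ⟨ModuleCat.of R PUnit, ModuleCat.of R M, 0, ⟨fun _ _ _ _ _ _ _ _ _ =>
      ⟨0, fun _ => Subsingleton.elim _ _⟩⟩, fun I =>
      ⟨(zeroEquiv I M).symm.toLinearMap, (zeroEquiv I M).symm.surjective, fun z => ?_⟩⟩
    refine (zeroEquiv I M).symm.map_eq_zero_iff.trans ⟨?_, ?_⟩
    · rintro rfl
      exact ⟨0, zero_mem _, rfl⟩
    · rintro ⟨y, -, h⟩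
      exact Subtype.ext h.symm
  | succ n ih =>
    obtain ⟨E, f, hE, hf⟩ := exists_injective_embedding (R := R) M
    have hfg : Function.Exact f (LinearMap.range f).mkQ := LinearMap.exact_map_mkQ_range f
    have hg := (LinearMap.range f).mkQ_surjective
    cases n with
    | zero =>
      refine ⟨E, ModuleCat.of R (E ⧸ LinearMap.range f), (LinearMap.range f).mkQ, hE, fun I =>
        ⟨δ I 0 hf hfg hg ∘ₗ (zeroEquiv I _).symm.toLinearMap,
          (δ_surjective_of_injective I 0 hf hfg hg hE).comp (zeroEquiv I _).symm.surjective,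
          fun z => ?_⟩⟩
      refine (exact_map_δ I 0 hf hfg hg ((zeroEquiv I _).symm z)).trans ⟨?_, ?_⟩
      · rintro ⟨y, hy⟩
        refine ⟨zeroEquiv I E y, (zeroEquiv I E y).2, ?_⟩
        rw [← coe_zeroEquiv_map, hy, LinearEquiv.apply_symm_apply]
      · rintro ⟨y, hy, h⟩
        refine ⟨(zeroEquiv I E).symm ⟨y, hy⟩, (LinearEquiv.eq_symm_apply _).2 (Subtype.ext ?_)⟩
        rw [coe_zeroEquiv_map, LinearEquiv.apply_symm_apply, ← h]
    | succ n =>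
      obtain ⟨E', N, g, hE', h⟩ := ih (E ⧸ LinearMap.range f)
      refine ⟨E', N, g, hE', fun I => ?_⟩
      obtain ⟨φ, hφ, hφ'⟩ := h I
      have hs := δ_surjective_of_injective I (n + 1) hf hfg hg hE
      have hi := δ_injective_of_injective I n hf hfg hg hE
      generalize δ I (n + 1) hf hfg hg = d at hs hi
      refine ⟨d ∘ₗ φ, hs.comp hφ, fun z => ?_⟩
      rw [← hφ', LinearMap.comp_apply, map_eq_zero_iff d hi]

/-- Every element of `H^n_I(M)` is `I`-power torsion. -/
lemma powTorsion_eq_top (M : Type u) [AddCommGroup M] [Module R M] :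
    I.powTorsion (LocalCohomology I n M) = ⊤ := by
  obtain ⟨E, N, g, -, h⟩ := exists_powTorsion_presentation (R := R) n M
  obtain ⟨φ, hφ, -⟩ := h I
  refine eq_top_iff.2 fun z _ => ?_
  obtain ⟨⟨y, k, hk⟩, rfl⟩ := hφ z
  refine ⟨k, fun a ha => ?_⟩
  rw [← map_smul, show a • (⟨y, k, hk⟩ : I.powTorsion N) = 0 from Subtype.ext (hk a ha), map_zero]

lemma exists_pow_smul_eq_zero {x : R} (hx : x ∈ I) (z : LocalCohomology I n M) :
    ∃ k : ℕ, x ^ k • z = 0 := by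
  have hz : z ∈ I.powTorsion (LocalCohomology I n M) := by
    rw [powTorsion_eq_top]
    trivial
  obtain ⟨k, hk⟩ := hz
  exact ⟨k, hk _ (Ideal.pow_mem_pow hx k)⟩

lemma subsingleton_top : Subsingleton (LocalCohomology (⊤ : Ideal R) n M) := by
  refine subsingleton_of_forall_eq 0 fun z => ?_
  obtain ⟨k, hk⟩ := exists_pow_smul_eq_zero (⊤ : Ideal R) n (x := 1) trivial z
  simpa using hk

end LocalCohomology

end

noncomputable section

namespace Ideal

variable {R : Type*} [CommRing R] (I : Ideal R) {M N : Type*} [AddCommGroup M] [Module R M]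
  [AddCommGroup N] [Module R N]

lemma map_mem_powTorsion {I : Ideal R} (f : M →ₗ[R] N) {m : M} (hm : m ∈ I.powTorsion M) :
    f m ∈ I.powTorsion N := by
  obtain ⟨k, hk⟩ := hm
  exact ⟨k, fun a ha => by rw [← map_smul, hk a ha, map_zero]⟩

lemma mem_powTorsion_powTorsion {I : Ideal R} (m : I.powTorsion M) :
    m ∈ I.powTorsion (I.powTorsion M) := by
  obtain ⟨m, k, hk⟩ := m
  exact ⟨k, fun a ha => Subtype.ext (hk a ha)⟩

lemma powTorsion_powTorsion : I.powTorsion (I.powTorsion M) = ⊤ :=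
  eq_top_iff.2 fun m _ => mem_powTorsion_powTorsion m

lemma powTorsion_eq_top_of_surjective {I : Ideal R} (f : M →ₗ[R] N) (hf : Function.Surjective f)
    (h : I.powTorsion M = ⊤) : I.powTorsion N = ⊤ := by
  refine eq_top_iff.2 fun n _ => ?_
  obtain ⟨m, rfl⟩ := hf n
  exact map_mem_powTorsion f (h ▸ trivial)

lemma exists_pow_smul_eq_zero_of_finite {I : Ideal R} [Module.Finite R M] (f : M →ₗ[R] N)
    (hf : ∀ m, f m ∈ I.powTorsion N) : ∃ k : ℕ, ∀ a ∈ I ^ k, ∀ m, a • f m = 0 := by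
  obtain ⟨S, hS⟩ := Module.Finite.fg_top (R := R) (M := M)
  choose k hk using hf
  refine ⟨S.sup k, fun a ha m => ?_⟩
  have hm : m ∈ Submodule.span R (S : Set M) := hS ▸ trivial
  induction hm using Submodule.span_induction with
  | mem m hm => exact hk m a (Ideal.pow_le_pow_right (Finset.le_sup hm) ha)
  | zero => simp
  | add m n _ _ hm hn => rw [map_add, smul_add, hm, hn, add_zero]
  | smul r m _ hm => rw [map_smul, smul_comm, hm, smul_zero]

lemma mem_powTorsion_iff_le_radical [IsNoetherianRing R] {I : Ideal R} {m : M} :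
    m ∈ I.powTorsion M ↔ I ≤ (Submodule.span R {m}).annihilator.radical := by
  constructor
  · rintro ⟨k, hk⟩ x hx
    exact ⟨k, (Submodule.mem_annihilator_span_singleton m _).2 (hk _ (Ideal.pow_mem_pow hx k))⟩
  · intro hle
    obtain ⟨k, hk⟩ := Ideal.exists_pow_le_of_le_radical_of_fg hle (IsNoetherian.noetherian I)
    exact ⟨k, fun a ha => (Submodule.mem_annihilator_span_singleton m _).1 (hk ha)⟩

end Ideal

variable {R : Type u} [CommRing R]

/-- Over a Noetherian ring, the `I`-power torsion of an injective module is injective. -/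
lemma Module.Injective.powTorsion [IsNoetherianRing R] (I : Ideal R) {E : Type u}
    [AddCommGroup E] [Module R E] (hE : Module.Injective R E) :
    Module.Injective R (I.powTorsion E) := by
  refine Module.Baer.injective fun J f => ?_
  obtain ⟨k, hk⟩ := Ideal.exists_pow_smul_eq_zero_of_finite (I := I) f
    fun m => Ideal.mem_powTorsion_powTorsion (f m)
  obtain ⟨c, hc⟩ := I.exists_pow_inf_eq_pow_smul (M := R) J
  have hker : ∀ x : J, (x : R) ∈ I ^ (k + c) → f x = 0 := by
    intro x hx
    have h : (x : R) ∈ I ^ (k + c) • (⊤ : Submodule R R) ⊓ J :=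
      ⟨by simpa using hx, x.2⟩
    rw [hc _ (Nat.le_add_left c k), Nat.add_sub_cancel] at h
    have h' : (x : R) ∈ I ^ k • (J : Submodule R R) :=
      Submodule.smul_mono le_rfl inf_le_right h
    have h'' : ∀ y ∈ I ^ k • (J : Submodule R R), ∀ hy : y ∈ J, f ⟨y, hy⟩ = 0 := by
      intro y hy
      refine Submodule.smul_induction_on' (p := fun y _ => ∀ hy : y ∈ J, f ⟨y, hy⟩ = 0) hy ?_ ?_
      · intro r hr n hn _
        exact (f.map_smul r ⟨n, hn⟩).trans (hk r hr _)
      · intro y hy z hz ihy ihz _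
        have hy' := Submodule.smul_le_right hy
        have hz' := Submodule.smul_le_right hz
        exact (f.map_add ⟨y, hy'⟩ ⟨z, hz'⟩).trans (by rw [ihy, ihz, add_zero])
    exact h'' x h' x.2
  let q : J →ₗ[R] R ⧸ I ^ (k + c) := (I ^ (k + c)).mkQ ∘ₗ J.subtype
  have hq : LinearMap.ker q ≤ LinearMap.ker ((I.powTorsion E).subtype ∘ₗ f) := by
    intro x hx
    have : (x : R) ∈ I ^ (k + c) := (Submodule.Quotient.mk_eq_zero _).1 hx
    simp [hker x this]
  obtain ⟨h, hh⟩ := hE.out ((LinearMap.ker q).liftQ q le_rfl)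
    (LinearMap.ker_eq_bot.1 (Submodule.ker_liftQ_eq_bot _ _ _ le_rfl))
    ((LinearMap.ker q).liftQ _ hq)
  refine ⟨LinearMap.codRestrict _ (h ∘ₗ (I ^ (k + c)).mkQ) fun r => ⟨k + c, fun a ha => ?_⟩,
    fun x hx => Subtype.ext (hh (Submodule.Quotient.mk ⟨x, hx⟩))⟩
  rw [LinearMap.comp_apply, ← map_smul, ← map_smul, Submodule.mkQ_apply, smul_eq_mul,
    (Submodule.Quotient.mk_eq_zero _).2 ((I ^ (k + c)).mul_mem_right r ha), map_zero]

namespace LocalCohomology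

variable (I : Ideal R)

lemma subsingleton_succ_of_powTorsion_eq_top [IsNoetherianRing R] (n : ℕ) (T : Type u)
    [AddCommGroup T] [Module R T] (hT : I.powTorsion T = ⊤) :
    Subsingleton (LocalCohomology I (n + 1) T) := by
  induction n generalizing T with
  | zero =>
    obtain ⟨E, f₀, hE, hf₀⟩ := exists_injective_embedding (R := R) T
    have hG := hE.powTorsion I
    let f : T →ₗ[R] I.powTorsion E := f₀.codRestrict _ fun t =>
      Ideal.map_mem_powTorsion f₀ (hT ▸ trivial)
    have hf : Function.Injective f := fun a b h => hf₀ (congr_arg Subtype.val h)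
    have hfg : Function.Exact f (LinearMap.range f).mkQ := LinearMap.exact_map_mkQ_range f
    have hg := (LinearMap.range f).mkQ_surjective
    refine subsingleton_of_forall_eq 0 fun z => ?_
    obtain ⟨y, rfl⟩ := δ_surjective_of_injective I 0 hf hfg hg hG z
    refine (exact_map_δ I 0 hf hfg hg y).2 ?_
    obtain ⟨e, he⟩ := hg (zeroEquiv I _ y)
    refine ⟨(zeroEquiv I _).symm ⟨e, Ideal.mem_powTorsion_powTorsion e⟩, ?_⟩
    apply (zeroEquiv I _).injective
    refine Subtype.ext ?_
    rw [coe_zeroEquiv_map, LinearEquiv.apply_symm_apply, he]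
  | succ n ih =>
    obtain ⟨E, f₀, hE, hf₀⟩ := exists_injective_embedding (R := R) T
    have hG := hE.powTorsion I
    let f : T →ₗ[R] I.powTorsion E := f₀.codRestrict _ fun t =>
      Ideal.map_mem_powTorsion f₀ (hT ▸ trivial)
    have hf : Function.Injective f := fun a b h => hf₀ (congr_arg Subtype.val h)
    have hfg : Function.Exact f (LinearMap.range f).mkQ := LinearMap.exact_map_mkQ_range f
    have hg := (LinearMap.range f).mkQ_surjective
    have := ih (I.powTorsion E ⧸ LinearMap.range f)
      (Ideal.powTorsion_eq_top_of_surjective _ hg (Ideal.powTorsion_powTorsion I))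
    exact (δ_surjective_of_injective I (n + 1) hf hfg hg hG).subsingleton

lemma subsingleton_of_bijective_smul (n : ℕ) {M : Type u} [AddCommGroup M] [Module R M] {x : R}
    (hx : x ∈ I) (h : Function.Bijective (x • (LinearMap.id : M →ₗ[R] M))) :
    Subsingleton (LocalCohomology I n M) := by
  let e := LinearEquiv.ofBijective _ h
  have key : ∀ z : LocalCohomology I n M, x • z = 0 → z = 0 := by
    intro z hz
    have h₁ : e.symm.toLinearMap ∘ₗ (x • (LinearMap.id : M →ₗ[R] M)) = LinearMap.id :=
      LinearMap.ext fun m => e.symm_apply_apply m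
    rw [← LinearMap.id_apply (R := R) z, ← map_id, ← h₁, map_comp_apply, map_smul_id, hz, map_zero]
  refine subsingleton_of_forall_eq 0 fun z => ?_
  obtain ⟨k, hk⟩ := exists_pow_smul_eq_zero I n hx z
  induction k with
  | zero => simpa using hk
  | succ k ih => exact ih (key _ (by rwa [smul_smul, ← pow_succ']))

end LocalCohomology

end

noncomputable section

/-- `Set.HasChainTo S n p` means that `S` contains a strictly increasing chain of length `n`
ending at `p`. -/
def Set.HasChainTo {α : Type*} [Preorder α] (S : Set α) : ℕ → α → Prop
  | 0, p => p ∈ S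
  | n + 1, p => p ∈ S ∧ ∃ q < p, S.HasChainTo n q

namespace Set.HasChainTo

variable {α : Type*} [Preorder α] {S T : Set α}

lemma mem {n : ℕ} {p : α} (h : S.HasChainTo n p) : p ∈ S := by
  cases n with
  | zero => exact h
  | succ n => exact h.1

lemma mono (hST : S ⊆ T) {n : ℕ} {p : α} (h : S.HasChainTo n p) : T.HasChainTo n p := by
  induction n generalizing p with
  | zero => exact hST h
  | succ n ih => exact ⟨hST h.1, h.2.imp fun q hq => ⟨hq.1, ih hq.2⟩⟩

lemma succ_of_forall_exists_lt (hST : ∀ q ∈ S, q ∈ T ∧ ∃ q' < q, q' ∈ T) {n : ℕ} {p : α}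
    (h : S.HasChainTo n p) : T.HasChainTo (n + 1) p := by
  induction n generalizing p with
  | zero => exact hST p h
  | succ n ih => exact ⟨(hST p h.1).1, h.2.imp fun q hq => ⟨hq.1, ih hq.2⟩⟩

lemma le_height {n : ℕ} {p : α} (h : S.HasChainTo n p) :
    (n : ℕ∞) ≤ Order.height (⟨p, h.mem⟩ : S) := by
  induction n generalizing p with
  | zero => simp
  | succ n ih =>
    obtain ⟨q, hqp, hq⟩ := h.2
    have hlt : (⟨q, hq.mem⟩ : S) < ⟨p, h.mem⟩ := hqp
    push_cast
    exact (add_le_add_left (ih hq) 1).trans (Order.height_add_one_le hlt)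

lemma le_krullDim {n : ℕ} {p : α} (h : S.HasChainTo n p) : (n : WithBot ℕ∞) ≤ Order.krullDim S :=
  (WithBot.coe_le_coe.2 h.le_height).trans (Order.height_le_krullDim _)

end Set.HasChainTo

section support

variable {R : Type*} [CommRing R] {M L : Type*} [AddCommGroup M] [Module R M]
  [AddCommGroup L] [Module R L]

lemma IsLocalizedModule.bijective_smul_id (x : R) (f : M →ₗ[R] L)
    [IsLocalizedModule (Submonoid.powers x) f] :
    Function.Bijective (x • (LinearMap.id : L →ₗ[R] L)) :=
  (Module.End.isUnit_iff _).1
    (IsLocalizedModule.map_units f (⟨x, Submonoid.mem_powers x⟩ : Submonoid.powers x))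

/-- A prime in the support of `M_x / im M` lies in the support of `M` and is not minimal there. -/
lemma IsLocalizedModule.exists_lt_mem_support_of_mem_support_quotient_range (x : R)
    (f : M →ₗ[R] L) [IsLocalizedModule (Submonoid.powers x) f] {q : PrimeSpectrum R}
    (hq : q ∈ Module.support R (L ⧸ LinearMap.range f)) :
    q ∈ Module.support R M ∧ ∃ q' < q, q' ∈ Module.support R M := by
  obtain ⟨l', hl'⟩ := Module.mem_support_iff'.1 hq
  obtain ⟨l, rfl⟩ := (LinearMap.range f).mkQ_surjective l'
  obtain ⟨⟨m, ⟨_, k, rfl⟩⟩, hm : x ^ k • l = f m⟩ :=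
    IsLocalizedModule.surj (Submonoid.powers x) f l
  have hinj : ∀ j (y : L), x ^ j • y = 0 → y = 0 := by
    intro j y hy
    exact IsLocalizedModule.smul_injective f (⟨x ^ j, j, rfl⟩ : Submonoid.powers x)
      (hy.trans (smul_zero _).symm)
  have hxq : x ∈ q.asIdeal := by
    by_contra hx
    refine hl' (x ^ k) (fun h => hx (q.2.mem_of_pow_mem k h)) ?_
    rw [← map_smul, hm]
    exact (Submodule.Quotient.mk_eq_zero _).2 ⟨m, rfl⟩
  have hdisj : Disjoint ((Submodule.span R {m}).annihilator : Set R)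
      (Submonoid.powers x ⊔ q.asIdeal.primeCompl : Submonoid R) := by
    refine Set.disjoint_left.2 fun r hr hr' => ?_
    obtain ⟨_, ⟨j, rfl⟩, s, hs, rfl⟩ := Submonoid.mem_sup.1 hr'
    have h₁ : (x ^ j * s) • m = 0 := Submodule.mem_annihilator_span_singleton m _ |>.1 hr
    refine hl' s hs ?_
    rw [← map_smul, hinj (j + k) (s • l), map_zero]
    rw [pow_add, mul_smul, smul_comm (x ^ k), hm, ← map_smul, ← map_smul, ← mul_smul, h₁, map_zero]
  obtain ⟨q', hq', hle, hd⟩ := Ideal.exists_le_prime_disjoint _ _ hdisj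
  have hq'q : q' ≤ q.asIdeal := fun r hr => by
    by_contra hrq
    exact Set.disjoint_left.1 hd hr (Submonoid.mem_sup_right hrq)
  refine ⟨Module.mem_support_iff_exists_annihilator.2 ⟨m, hle.trans hq'q⟩, ⟨q', hq'⟩, ?_,
    Module.mem_support_iff_exists_annihilator.2 ⟨m, hle⟩⟩
  refine lt_of_le_of_ne hq'q fun h => ?_
  have hxq' : x ∈ (q' : Set R) := (congr_arg PrimeSpectrum.asIdeal h).ge hxq
  exact Set.disjoint_left.1 hd hxq' (Submonoid.mem_sup_left (Submonoid.mem_powers x))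

end support

namespace LocalCohomology

variable {R : Type u} [CommRing R] (I : Ideal R)

/-- If the local cohomology of `M_x / im M` vanishes at `p` in degree `n`, then the vanishing at
`p` of the local cohomology in degree `n + 1` can be tested on the `x`-power torsion of `M`. -/
lemma exists_smul_eq_zero_of_ker (p : PrimeSpectrum R) (n : ℕ) {M L : Type u} [AddCommGroup M]
    [Module R M] [AddCommGroup L] [Module R L] {x : R} (hx : x ∈ I) (f : M →ₗ[R] L)
    [IsLocalizedModule (Submonoid.powers x) f]
    (hQ : ∀ z : LocalCohomology I n (L ⧸ LinearMap.range f), ∃ s ∉ p.asIdeal, s • z = 0)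
    (hK : ∀ z : LocalCohomology I (n + 1) (LinearMap.ker f), ∃ s ∉ p.asIdeal, s • z = 0)
    (z : LocalCohomology I (n + 1) M) : ∃ s ∉ p.asIdeal, s • z = 0 := by
  have := subsingleton_of_bijective_smul I (n + 1) hx
    (IsLocalizedModule.bijective_smul_id x f)
  have hfg : Function.Exact (LinearMap.range f).subtype (LinearMap.range f).mkQ :=
    LinearMap.exact_subtype_mkQ _
  have hg := (LinearMap.range f).mkQ_surjective
  have hf := (LinearMap.range f).subtype_injective
  obtain ⟨w, hw⟩ := (exact_δ_map I n hf hfg hg (map I (n + 1) f.rangeRestrict z)).1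
    (Subsingleton.elim _ _)
  obtain ⟨s, hs, hsw⟩ := hQ w
  have hK' : Function.Exact (LinearMap.ker f).subtype f.rangeRestrict := by
    rw [LinearMap.exact_iff, LinearMap.ker_rangeRestrict, Submodule.range_subtype]
  obtain ⟨y, hy⟩ := (exact_map_map I (n + 1) (LinearMap.ker f).subtype_injective hK'
    f.surjective_rangeRestrict (s • z)).1 (by rw [map_smul, ← hw, ← map_smul, hsw, map_zero])
  obtain ⟨t, ht, hty⟩ := hK y
  refine ⟨t * s, fun h => (p.2.mem_or_mem h).elim ht hs, ?_⟩
  rw [mul_smul, ← hy, ← map_smul, hty, map_zero]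

/-- If the support of `M` contains no chain of length `n` ending at `p`, then `H^n_I(M)` vanishes
at `p`. -/
lemma exists_smul_eq_zero_of_not_hasChainTo [IsNoetherianRing R] (p : PrimeSpectrum R) (n : ℕ)
    (M : Type u) [AddCommGroup M] [Module R M]
    (hM : ¬ (Module.support R M).HasChainTo n p) (z : LocalCohomology I n M) :
    ∃ s ∉ p.asIdeal, s • z = 0 := by
  induction n generalizing M with
  | zero =>
    obtain ⟨s, hs, h⟩ := Module.notMem_support_iff'.1 hM (zeroEquiv I M z)
    exact ⟨s, hs, (zeroEquiv I M).injective (Subtype.ext (by simpa using h))⟩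
  | succ n ih =>
    obtain ⟨S, hS⟩ := IsNoetherian.noetherian I
    suffices H : ∀ (F : Finset R), F ⊆ S → ∀ (M : Type u) [AddCommGroup M] [Module R M],
        ¬ (Module.support R M).HasChainTo (n + 1) p →
        (∀ x ∈ S, x ∉ F → ∀ m : M, ∃ k : ℕ, x ^ k • m = 0) →
        ∀ z : LocalCohomology I (n + 1) M, ∃ s ∉ p.asIdeal, s • z = 0 from
      H S subset_rfl M hM (fun x hx hx' => absurd hx hx') z
    clear! M
    classical
    intro F
    induction F using Finset.induction_on with
    | empty =>
      intro _ M _ _ _ hT z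
      have hI : I.powTorsion M = ⊤ := by
        refine eq_top_iff.2 fun m _ => Ideal.mem_powTorsion_iff_le_radical.2 ?_
        refine hS.symm.le.trans (Submodule.span_le.2 fun x hx => ?_)
        obtain ⟨k, hk⟩ := hT x hx (Finset.notMem_empty x) m
        exact ⟨k, (Submodule.mem_annihilator_span_singleton m _).2 hk⟩
      have := subsingleton_succ_of_powTorsion_eq_top I n M hI
      exact ⟨1, p.1.ne_top_iff_one.1 p.2.ne_top, Subsingleton.elim _ _⟩
    | insert x F _ ihF =>
      intro hF M _ _ hM hT z
      have hxI : x ∈ I := hS ▸ Submodule.subset_span (hF (Finset.mem_insert_self x F))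
      refine exists_smul_eq_zero_of_ker I p n hxI
        (LocalizedModule.mkLinearMap (Submonoid.powers x) M) (ih _ fun h => hM ?_)
        (ihF ((Finset.subset_insert x F).trans hF) _ (fun h => hM ?_) ?_) z
      · exact h.succ_of_forall_exists_lt fun q hq =>
          IsLocalizedModule.exists_lt_mem_support_of_mem_support_quotient_range x _ hq
      · exact h.mono (Module.support_subset_of_injective _ (Submodule.subtype_injective _))
      · rintro y hy hyF ⟨m, hm⟩
        by_cases hyx : y = x
        · subst hyx
          obtain ⟨⟨_, k, rfl⟩, hk⟩ :=
            (IsLocalizedModule.eq_zero_iff (Submonoid.powers y) _).1 hm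
          exact ⟨k, Subtype.ext hk⟩
        · obtain ⟨k, hk⟩ := hT y hy (by simp [hyx, hyF]) m
          exact ⟨k, Subtype.ext hk⟩

/-- Over a Noetherian local ring, the elements of `H^n_I(M)` with `n = dim M` are killed by powers
of every element of the maximal ideal. -/
lemma exists_pow_smul_eq_zero_of_krullDim_eq [IsNoetherianRing R] [IsLocalRing R] (n : ℕ)
    {M : Type u} [AddCommGroup M] [Module R M]
    (hn : Order.krullDim (Module.support R M) = (n : WithBot ℕ∞)) {x : R}
    (hx : x ∈ IsLocalRing.maximalIdeal R) (z : LocalCohomology I n M) :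
    ∃ k : ℕ, x ^ k • z = 0 := by
  suffices H : x ∈ (Submodule.span R {z}).annihilator.radical by
    obtain ⟨k, hk⟩ := H
    exact ⟨k, (Submodule.mem_annihilator_span_singleton z _).1 hk⟩
  rw [Ideal.radical_eq_sInf, Ideal.mem_sInf]
  rintro q ⟨hle, hq⟩
  by_contra hxq
  have hlt : (⟨q, hq⟩ : PrimeSpectrum R) < IsLocalRing.closedPoint R :=
    lt_of_le_of_ne (IsLocalRing.le_maximalIdeal hq.ne_top)
      fun h => hxq ((congr_arg PrimeSpectrum.asIdeal h).ge hx)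
  obtain ⟨s, hs, hsz⟩ := exists_smul_eq_zero_of_not_hasChainTo I ⟨q, hq⟩ n M (fun h => by
    have hc : (Module.support R M).HasChainTo (n + 1) (IsLocalRing.closedPoint R) :=
      ⟨Module.mem_support_mono hlt.le h.mem, _, hlt, h⟩
    have := hc.le_krullDim
    rw [hn] at this
    have := Nat.cast_le.1 this
    omega) z
  exact hs (hle ((Submodule.mem_annihilator_span_singleton z _).2 hsz))

end LocalCohomology

end

/-- Over a Noetherian ring, an element of an injective module is divisible by `x ^ k` up to
`x`-power torsion. -/
lemma Module.Injective.exists_pow_smul_eq {R : Type u} [CommRing R] [IsNoetherianRing R]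
    {E : Type u} [AddCommGroup E] [Module R E] (hE : Module.Injective R E) (x : R) (k : ℕ) (y : E) :
    ∃ (y' : E) (j : ℕ), x ^ (j + k) • y' = x ^ j • y := by
  let ann (j : ℕ) : Submodule R R := LinearMap.ker (LinearMap.toSpanSingleton R R (x ^ j))
  have hann : Monotone ann := monotone_nat_of_le_succ fun j r (hr : r * x ^ j = 0) => by
    change r * x ^ (j + 1) = 0
    rw [pow_succ, ← mul_assoc, hr, zero_mul]
  obtain ⟨j, hj⟩ := monotone_stabilizes_iff_noetherian.2 ‹IsNoetherianRing R› ⟨ann, hann⟩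
  have hle : ann (j + k) ≤ LinearMap.ker (LinearMap.toSpanSingleton R E (x ^ j • y)) := by
    intro r hr
    have hr' : r ∈ ann j := (hj (j + k) (Nat.le_add_right j k)).ge hr
    have hr'' : r * x ^ j = 0 := hr'
    change r • x ^ j • y = 0
    rw [← mul_smul, hr'', zero_smul]
  obtain ⟨h, hh⟩ := hE.out ((ann (j + k)).liftQ _ le_rfl)
    (LinearMap.ker_eq_bot.1 (Submodule.ker_liftQ_eq_bot _ _ _ le_rfl))
    ((ann (j + k)).liftQ _ hle)
  refine ⟨h 1, j, ?_⟩
  have := hh (Submodule.Quotient.mk 1)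
  simp only [Submodule.liftQ_apply, LinearMap.toSpanSingleton_apply, one_smul] at this
  rw [← this, ← map_smul, smul_eq_mul, mul_one]

namespace LocalCohomology

variable {R : Type u} [CommRing R] [IsNoetherianRing R]

lemma isArtinian_of_isArtinian_sup_span (I : Ideal R) (n : ℕ) {M : Type u} [AddCommGroup M]
    [Module R M] (x : R) (hx : ∀ z : LocalCohomology I n M, ∃ k : ℕ, x ^ k • z = 0)
    (h : IsArtinian R (LocalCohomology (I ⊔ Ideal.span {x}) n M)) :
    IsArtinian R (LocalCohomology I n M) := by
  obtain ⟨E, N, g, hE, H⟩ := exists_powTorsion_presentation (R := R) n M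
  obtain ⟨φ, hφ, hφ_ker⟩ := H I
  obtain ⟨φ', hφ', hφ'_ker⟩ := H (I ⊔ Ideal.span {x})
  have hle (X : ModuleCat.{u} R) :
      (I ⊔ Ideal.span {x}).powTorsion X ≤ I.powTorsion X := fun y hy =>
    Ideal.mem_powTorsion_iff_le_radical.2
      (le_sup_left.trans (Ideal.mem_powTorsion_iff_le_radical.1 hy))
  have hker : LinearMap.ker φ' ≤ LinearMap.ker (φ ∘ₗ Submodule.inclusion (hle N)) := by
    intro w hw
    obtain ⟨y, hy, hyw⟩ := (hφ'_ker w).1 hw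
    exact (hφ_ker _).2 ⟨y, hle E hy, hyw⟩
  have hsurj : Function.Surjective (φ ∘ₗ Submodule.inclusion (hle N)) := by
    intro z
    obtain ⟨k, hk⟩ := hx z
    obtain ⟨w, rfl⟩ := hφ z
    obtain ⟨y, hy, hyw⟩ := (hφ_ker (x ^ k • w)).1 (by rw [map_smul, hk])
    obtain ⟨⟨y', hy'⟩, j, hj⟩ := (hE.powTorsion I).exists_pow_smul_eq x k ⟨y, hy⟩
    have hj' : x ^ (j + k) • y' = x ^ j • y := congr_arg Subtype.val hj
    have hw' : (w : N) - g y' ∈ (I ⊔ Ideal.span {x}).powTorsion N := by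
      refine Ideal.mem_powTorsion_iff_le_radical.2 (sup_le
        (Ideal.mem_powTorsion_iff_le_radical.1
          (sub_mem w.2 (Ideal.map_mem_powTorsion g hy'))) ?_)
      refine (Ideal.span_singleton_le_iff_mem _).2
        ⟨j + k, (Submodule.mem_annihilator_span_singleton _ _).2 ?_⟩
      rw [smul_sub, ← map_smul, hj', map_smul, hyw, pow_add, mul_smul]
      exact sub_self _
    refine ⟨⟨_, hw'⟩, ?_⟩
    rw [← sub_eq_zero, LinearMap.comp_apply, ← map_sub]
    refine (hφ_ker _).2 ⟨-y', neg_mem hy', ?_⟩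
    simp
  have := isArtinian_of_linearEquiv (φ'.quotKerEquivOfSurjective hφ').symm
  refine isArtinian_of_surjective _ ((LinearMap.ker φ').liftQ _ hker) ?_
  exact LinearMap.range_eq_top.1 ((Submodule.range_liftQ _ _ _).trans
    (LinearMap.range_eq_top.2 hsurj))

end LocalCohomology

/-- over a Noetherian local ring, if `M` has Krull dimension `n` and
`H^n_m(M)` is Artinian, then `H^n_I(M)` is Artinian for every ideal `I`. -/
theorem isArtinian_localCohomology_of_isArtinian_localCohomology_maximalIdeal
    (R : Type u) [CommRing R] [IsNoetherianRing R] [IsLocalRing R]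
    (M : ModuleCat.{u} R) (n : ℕ)
    (hn : Order.krullDim (Module.support R M) = (n : WithBot ℕ∞))
    (hart : IsArtinian R ((localCohomology (IsLocalRing.maximalIdeal R) n).obj M)) :
    ∀ I : Ideal R, IsArtinian R ((localCohomology I n).obj M) := by
  intro I
  induction I using IsNoetherian.induction with
  | hgt I ih =>
    by_cases htop : I = ⊤
    · subst htop
      have : Subsingleton ((localCohomology (⊤ : Ideal R) n).obj M) :=
        LocalCohomology.subsingleton_top (M := M) n
      infer_instance
    obtain rfl | hlt := (IsLocalRing.le_maximalIdeal htop).eq_or_lt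
    · exact hart
    obtain ⟨x, hx, hxI⟩ := SetLike.exists_of_lt hlt
    refine LocalCohomology.isArtinian_of_isArtinian_sup_span (M := M) I n x
      (LocalCohomology.exists_pow_smul_eq_zero_of_krullDim_eq I n hn hx) (ih _ ?_)
    exact left_lt_sup.2 fun h => hxI (h (Ideal.mem_span_singleton_self x))
end

section
/- Let (R, m) be a commutative Noetherian local ring and M an R-module of Krull dimension n with H^n_m(M) ≠ 0, and let I be an ideal of R with dim(R/(I + Ann M)) = d, where Ann M is the annihilator of M. If the top local cohomology module H^{cd(I,M)}_I(M) is Artinian, then either cd(I,M) = n, or there exists an integer i with n − d ≤ i < cd(I,M) such that H^{n−i}_m(H^i_I(M)) ≠ 0. -/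
universe u

open CategoryTheory

namespace LocalCohomologyAux

section DirectLimit

variable {R : Type*} [CommRing R]
  {G G' G'' : ℕ → Type*} [∀ i, AddCommGroup (G i)] [∀ i, Module R (G i)]
  [∀ i, AddCommGroup (G' i)] [∀ i, Module R (G' i)]
  [∀ i, AddCommGroup (G'' i)] [∀ i, Module R (G'' i)]
  {f : ∀ i j, i ≤ j → G i →ₗ[R] G j} {f' : ∀ i j, i ≤ j → G' i →ₗ[R] G' j}
  {f'' : ∀ i j, i ≤ j → G'' i →ₗ[R] G'' j}

/-- Direct limits over `ℕ` are exact. -/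
lemma directLimit_map_exact [DirectedSystem G'' (fun i j h ↦ f'' i j h)]
    (g : ∀ i, G i →ₗ[R] G' i) (hg : ∀ i j h, g j ∘ₗ f i j h = f' i j h ∘ₗ g i)
    (g' : ∀ i, G' i →ₗ[R] G'' i) (hg' : ∀ i j h, g' j ∘ₗ f' i j h = f'' i j h ∘ₗ g' i)
    (hex : ∀ i, Function.Exact (g i) (g' i)) :
    Function.Exact (Module.DirectLimit.map g hg) (Module.DirectLimit.map g' hg') := by
  intro y
  constructor
  · intro hy
    obtain ⟨i, y, rfl⟩ := Module.DirectLimit.exists_of y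
    rw [Module.DirectLimit.map_apply_of] at hy
    obtain ⟨j, hij, h⟩ := Module.DirectLimit.of.zero_exact hy
    have h' : g' j (f' i j hij y) = 0 := by
      rw [← h]; exact LinearMap.congr_fun (hg' i j hij) y
    obtain ⟨x, hx⟩ := (hex j _).1 h'
    exact ⟨Module.DirectLimit.of R ℕ G f j x, by
      rw [Module.DirectLimit.map_apply_of, hx, Module.DirectLimit.of_f]⟩
  · rintro ⟨x, rfl⟩
    obtain ⟨i, x, rfl⟩ := Module.DirectLimit.exists_of x
    rw [Module.DirectLimit.map_apply_of, Module.DirectLimit.map_apply_of,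
      (hex i).apply_apply_eq_zero, map_zero]

end DirectLimit

open Abelian

variable {R : Type u} [CommRing R] (I : Ideal R)

/-- The projection `R ⧸ I ^ t ⟶ R ⧸ I ^ s` for `s ≤ t`. -/
noncomputable abbrev quotPowHom {s t : ℕ} (h : s ≤ t) :
    ModuleCat.of R (R ⧸ I ^ t) ⟶ ModuleCat.of R (R ⧸ I ^ s) :=
  ModuleCat.ofHom (Submodule.mapQ _ _ LinearMap.id (Ideal.pow_le_pow_right h))

lemma quotPowHom_refl (t : ℕ) : quotPowHom I (le_refl t) = 𝟙 _ := by
  ext; simp [quotPowHom]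

lemma quotPowHom_comp {s t v : ℕ} (h : s ≤ t) (h' : t ≤ v) :
    quotPowHom I h' ≫ quotPowHom I h = quotPowHom I (h.trans h') := by
  ext; simp [quotPowHom]

/-- The transition maps of the system `Ext^i(R ⧸ I ^ t, A)`. -/
noncomputable abbrev extTrans (i : ℕ) (A : Type u) [AddCommGroup A] [Module R A] (s t : ℕ)
    (h : s ≤ t) :
    Ext (ModuleCat.of R (R ⧸ I ^ s)) (ModuleCat.of R A) i →ₗ[R]
      Ext (ModuleCat.of R (R ⧸ I ^ t)) (ModuleCat.of R A) i :=
  (Ext.mk₀ (quotPowHom I h)).precompOfLinear R (ModuleCat.of R A) (zero_add i)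

instance extTrans_directedSystem (i : ℕ) (A : Type u) [AddCommGroup A] [Module R A] :
    DirectedSystem (fun t ↦ Ext (ModuleCat.of R (R ⧸ I ^ t)) (ModuleCat.of R A) i)
      (fun s t h ↦ extTrans I i A s t h) where
  map_self t x := by
    simp [quotPowHom_refl]
  map_map s t v h h' x := by
    change (Ext.mk₀ (quotPowHom I h')).comp
        ((Ext.mk₀ (quotPowHom I h)).comp x (zero_add i)) (zero_add i) =
      (Ext.mk₀ (quotPowHom I (h.trans h'))).comp x (zero_add i)
    rw [← quotPowHom_comp I h h', ← Ext.mk₀_comp_mk₀_assoc]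

/-- Local cohomology as the direct limit of the derived-category `Ext`-modules. -/
abbrev LC (i : ℕ) (A : Type u) [AddCommGroup A] [Module R A] : Type u :=
  Module.DirectLimit (fun t ↦ Ext (ModuleCat.of R (R ⧸ I ^ t)) (ModuleCat.of R A) i)
    (extTrans I i A)

variable {A B C : Type u} [AddCommGroup A] [Module R A] [AddCommGroup B] [Module R B]
  [AddCommGroup C] [Module R C]

lemma postcomp_comp_extTrans {i n j : ℕ} (α : Ext (ModuleCat.of R A) (ModuleCat.of R B) n)
    (h : i + n = j) (s t : ℕ) (hst : s ≤ t) :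
    α.postcompOfLinear R (ModuleCat.of R (R ⧸ I ^ t)) h ∘ₗ extTrans I i A s t hst =
      extTrans I j B s t hst ∘ₗ α.postcompOfLinear R (ModuleCat.of R (R ⧸ I ^ s)) h := by
  ext x
  exact Ext.comp_assoc (Ext.mk₀ (quotPowHom I hst)) x α (zero_add i) h (by lia)

/-- The map on local cohomology given by postcomposition with an `Ext`-class. -/
noncomputable def LC.postcomp {i n j : ℕ} (α : Ext (ModuleCat.of R A) (ModuleCat.of R B) n)
    (h : i + n = j) : LC I i A →ₗ[R] LC I j B :=
  Module.DirectLimit.map (fun t ↦ α.postcompOfLinear R (ModuleCat.of R (R ⧸ I ^ t)) h)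
    (postcomp_comp_extTrans I α h)

lemma LC.postcomp_exact {i j k n m : ℕ} (α : Ext (ModuleCat.of R A) (ModuleCat.of R B) n)
    (β : Ext (ModuleCat.of R B) (ModuleCat.of R C) m) (h : i + n = j) (h' : j + m = k)
    (hzero : α.comp β rfl = 0)
    (hex : ∀ (X : ModuleCat.{u} R) (y : Ext X (ModuleCat.of R B) j), y.comp β h' = 0 →
      ∃ x : Ext X (ModuleCat.of R A) i, x.comp α h = y) :
    Function.Exact (LC.postcomp I α h) (LC.postcomp I β h') := by
  refine directLimit_map_exact _ (postcomp_comp_extTrans I α h) _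
    (postcomp_comp_extTrans I β h') fun t x ↦ ⟨fun hx ↦ hex _ x hx, ?_⟩
  rintro ⟨y, rfl⟩
  change (y.comp α h).comp β h' = 0
  rw [Ext.comp_assoc y α β h rfl (by lia), hzero, Ext.comp_zero]

/-- Functoriality of local cohomology. -/
noncomputable def LC.map (i : ℕ) (f : A →ₗ[R] B) : LC I i A →ₗ[R] LC I i B :=
  LC.postcomp I (Ext.mk₀ (ModuleCat.ofHom f)) (add_zero i)

section LES

variable {f : A →ₗ[R] B} {g : B →ₗ[R] C}

lemma exists_shortExact (hf : Function.Injective f) (hfg : Function.Exact f g)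
    (hg : Function.Surjective g) :
    ∃ w, (ShortComplex.mk (ModuleCat.ofHom f) (ModuleCat.ofHom g) w).ShortExact := by
  refine ⟨?_, ?_⟩
  · ext x; exact hfg.apply_apply_eq_zero x
  · refine ShortComplex.ShortExact.mk' ?_ ?_ ?_
    · rw [ShortComplex.ShortExact.moduleCat_exact_iff_function_exact]; exact hfg
    · exact (ModuleCat.mono_iff_injective _).2 hf
    · exact (ModuleCat.epi_iff_surjective _).2 hg

lemma LC.map_exact (hf : Function.Injective f) (hfg : Function.Exact f g)
    (hg : Function.Surjective g) (i : ℕ) :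
    Function.Exact (LC.map I i f) (LC.map I i g) := by
  obtain ⟨w, hS⟩ := exists_shortExact hf hfg hg
  refine LC.postcomp_exact I _ _ _ _ ?_ fun X y hy ↦ Ext.covariant_sequence_exact₂ X hS y hy
  rw [Ext.mk₀_comp_mk₀, w, Ext.mk₀_zero]

/-- The connecting homomorphism, with the exactness of the long sequence. -/
lemma LC.exists_connecting (hf : Function.Injective f) (hfg : Function.Exact f g)
    (hg : Function.Surjective g) (i : ℕ) :
    ∃ δ : LC I i C →ₗ[R] LC I (i + 1) A,
      Function.Exact (LC.map I i g) δ ∧ Function.Exact δ (LC.map I (i + 1) f) := by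
  obtain ⟨w, hS⟩ := exists_shortExact hf hfg hg
  refine ⟨LC.postcomp I hS.extClass rfl, ?_, ?_⟩
  · exact LC.postcomp_exact I _ _ _ _ hS.comp_extClass fun X y hy ↦
      Ext.covariant_sequence_exact₃ X hS y rfl hy
  · exact LC.postcomp_exact I _ _ _ _ hS.extClass_comp fun X y hy ↦
      Ext.covariant_sequence_exact₁ X hS y hy rfl

end LES

lemma LC.subsingleton_of_injective [hA : Module.Injective R A] (i : ℕ) :
    Subsingleton (LC I (i + 1) A) := by
  have : Injective (ModuleCat.of R A) :=
    (Module.injective_iff_injective_object R A).1 hA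
  refine subsingleton_of_forall_eq 0 fun x ↦ ?_
  obtain ⟨t, x, rfl⟩ := Module.DirectLimit.exists_of x
  rw [Ext.eq_zero_of_injective x, map_zero]

/-- Evaluation of a class of degree zero at the class of `1`. -/
noncomputable def extEval (A : Type u) [AddCommGroup A] [Module R A] (t : ℕ) :
    Ext (ModuleCat.of R (R ⧸ I ^ t)) (ModuleCat.of R A) 0 →ₗ[R] A :=
  LinearMap.applyₗ (R := R) (1 : R ⧸ I ^ t) ∘ₗ (ModuleCat.homLinearEquiv (S := R)).toLinearMap
      ∘ₗ (Ext.linearEquiv₀ (R := R)).toLinearMap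

lemma extEval_mk₀ (t : ℕ) (x : ModuleCat.of R (R ⧸ I ^ t) ⟶ ModuleCat.of R A) :
    extEval I A t (Ext.mk₀ x) = x.hom (1 : R ⧸ I ^ t) := by
  have : (Ext.linearEquiv₀ (R := R)) (Ext.mk₀ x) = x := by
    rw [← Ext.linearEquiv₀_symm_apply (R := R), LinearEquiv.apply_symm_apply]
  simp only [extEval, LinearMap.comp_apply, LinearEquiv.coe_coe, this]
  rfl

lemma extEval_extTrans (s t : ℕ) (h : s ≤ t)
    (x : Ext (ModuleCat.of R (R ⧸ I ^ s)) (ModuleCat.of R A) 0) :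
    extEval I A t (extTrans I 0 A s t h x) = extEval I A s x := by
  rw [← Ext.mk₀_linearEquiv₀_apply (R := R) x]
  generalize Ext.linearEquiv₀ (R := R) x = x
  change extEval I A t ((Ext.mk₀ (quotPowHom I h)).comp (Ext.mk₀ x) (zero_add 0)) = _
  rw [Ext.mk₀_comp_mk₀, extEval_mk₀, extEval_mk₀]
  rfl

/-- The identification of the local cohomology in degree zero with a submodule of `A`. -/
noncomputable def LC.eval (A : Type u) [AddCommGroup A] [Module R A] : LC I 0 A →ₗ[R] A :=
  Module.DirectLimit.lift _ _ _ _ (extEval I A) (extEval_extTrans I)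

lemma LC.eval_injective : Function.Injective (LC.eval I A) := by
  rw [injective_iff_map_eq_zero]
  intro x hx
  obtain ⟨t, x, rfl⟩ := Module.DirectLimit.exists_of x
  rw [← Ext.mk₀_linearEquiv₀_apply (R := R) x] at hx ⊢
  generalize Ext.linearEquiv₀ (R := R) x = x at hx ⊢
  rw [LC.eval, Module.DirectLimit.lift_of, extEval_mk₀] at hx
  have : x = 0 := by
    ext
    exact hx
  rw [this, Ext.mk₀_zero, map_zero]

lemma LC.eval_map (f : A →ₗ[R] B) (x : LC I 0 A) :
    LC.eval I B (LC.map I 0 f x) = f (LC.eval I A x) := by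
  obtain ⟨t, x, rfl⟩ := Module.DirectLimit.exists_of x
  rw [← Ext.mk₀_linearEquiv₀_apply (R := R) x]
  generalize Ext.linearEquiv₀ (R := R) x = x
  rw [LC.map, LC.postcomp, Module.DirectLimit.map_apply_of, LC.eval, LC.eval,
    Module.DirectLimit.lift_of, Module.DirectLimit.lift_of]
  change extEval I B t ((Ext.mk₀ x).comp (Ext.mk₀ (ModuleCat.ofHom f)) (add_zero 0)) = _
  rw [Ext.mk₀_comp_mk₀, extEval_mk₀, extEval_mk₀]
  rfl

/-- The submodule of elements annihilated by a power of `I`. -/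
def powTorsion (A : Type u) [AddCommGroup A] [Module R A] : Submodule R A where
  carrier := {a | ∃ k, ∀ r ∈ I ^ k, r • a = 0}
  zero_mem' := ⟨0, by simp⟩
  add_mem' := by
    rintro a b ⟨k, hk⟩ ⟨l, hl⟩
    refine ⟨k + l, fun r hr ↦ ?_⟩
    rw [smul_add, hk r (Ideal.pow_le_pow_right (by lia) hr),
      hl r (Ideal.pow_le_pow_right (by lia) hr), add_zero]
  smul_mem' := by
    rintro c a ⟨k, hk⟩
    exact ⟨k, fun r hr ↦ by rw [smul_comm, hk r hr, smul_zero]⟩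

lemma LC.range_eval : LinearMap.range (LC.eval I A) = powTorsion I A := by
  ext a
  constructor
  · rintro ⟨x, rfl⟩
    obtain ⟨t, x, rfl⟩ := Module.DirectLimit.exists_of x
    rw [← Ext.mk₀_linearEquiv₀_apply (R := R) x]
    generalize Ext.linearEquiv₀ (R := R) x = x
    refine ⟨t, fun r hr ↦ ?_⟩
    rw [LC.eval, Module.DirectLimit.lift_of, extEval_mk₀, ← map_smul]
    have : r • (1 : R ⧸ I ^ t) = 0 := by
      rw [Algebra.smul_def, mul_one]
      exact Ideal.Quotient.eq_zero_iff_mem.2 hr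
    rw [this, map_zero]
  · rintro ⟨k, hk⟩
    refine ⟨Module.DirectLimit.of R ℕ _ _ k (Ext.mk₀ (ModuleCat.ofHom
      (Submodule.liftQ (I ^ k) (LinearMap.toSpanSingleton R A a) fun r hr ↦ hk r hr))), ?_⟩
    rw [LC.eval, Module.DirectLimit.lift_of, extEval_mk₀]
    exact one_smul R a

end LocalCohomologyAux

namespace LocalCohomologyAux

variable {R : Type u} [CommRing R] {I J K : Ideal R}
  {A B C : Type u} [AddCommGroup A] [Module R A] [AddCommGroup B] [Module R B]
  [AddCommGroup C] [Module R C]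

section Torsion

lemma powTorsion_anti (h : I ≤ J) : powTorsion J A ≤ powTorsion I A := by
  rintro a ⟨k, hk⟩
  exact ⟨k, fun r hr ↦ hk r (Ideal.pow_right_mono h k hr)⟩

lemma map_mem_powTorsion (f : A →ₗ[R] B) {a : A} (ha : a ∈ powTorsion I A) :
    f a ∈ powTorsion I B := by
  obtain ⟨k, hk⟩ := ha
  exact ⟨k, fun r hr ↦ by rw [← map_smul, hk r hr, map_zero]⟩

lemma mem_powTorsion_of_map {f : A →ₗ[R] B} (hf : Function.Injective f) {a : A}
    (ha : f a ∈ powTorsion I B) : a ∈ powTorsion I A := by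
  obtain ⟨k, hk⟩ := ha
  exact ⟨k, fun r hr ↦ hf (by rw [map_smul, hk r hr, map_zero])⟩

lemma powTorsion_eq_top_of_injective {f : A →ₗ[R] B} (hf : Function.Injective f)
    (hB : powTorsion I B = ⊤) : powTorsion I A = ⊤ :=
  eq_top_iff.2 fun _ _ ↦ mem_powTorsion_of_map hf (hB ▸ Submodule.mem_top)

lemma powTorsion_eq_top_of_surjective {f : A →ₗ[R] B} (hf : Function.Surjective f)
    (hA : powTorsion I A = ⊤) : powTorsion I B = ⊤ := by
  refine eq_top_iff.2 fun b _ ↦ ?_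
  obtain ⟨a, rfl⟩ := hf b
  exact map_mem_powTorsion f (hA ▸ Submodule.mem_top)

lemma powTorsion_powTorsion : powTorsion I (powTorsion I A) = ⊤ :=
  eq_top_iff.2 fun a _ ↦ mem_powTorsion_of_map (f := (powTorsion I A).subtype)
    (Submodule.subtype_injective _) a.2

lemma mem_powTorsion_sup {a : A} (h : a ∈ powTorsion I A) (h' : a ∈ powTorsion J A) :
    a ∈ powTorsion (I ⊔ J) A := by
  obtain ⟨k, hk⟩ := h
  obtain ⟨l, hl⟩ := h'
  refine ⟨k + l, fun r hr ↦ ?_⟩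
  obtain ⟨x, hx, y, hy, rfl⟩ := Submodule.mem_sup.1 (Ideal.sup_pow_add_le_pow_sup_pow hr)
  rw [add_smul, hk x hx, hl y hy, add_zero]

lemma powTorsion_sup_eq_top (h : powTorsion I A = ⊤) (h' : powTorsion J A = ⊤) :
    powTorsion (I ⊔ J) A = ⊤ :=
  eq_top_iff.2 fun _ _ ↦ mem_powTorsion_sup (h ▸ Submodule.mem_top) (h' ▸ Submodule.mem_top)

lemma powTorsion_le_of_le_radical [IsNoetherianRing R] (h : I ≤ J.radical) :
    powTorsion J A ≤ powTorsion I A := by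
  rintro a ⟨k, hk⟩
  obtain ⟨n, hn⟩ := Ideal.exists_pow_le_of_le_radical_of_fg h (IsNoetherian.noetherian I)
  refine ⟨n * k, fun r hr ↦ hk r ?_⟩
  rw [pow_mul] at hr
  exact Ideal.pow_right_mono hn k hr

lemma exists_pow_smul_eq_zero {P : Type*} [AddCommGroup P] [Module R P] [IsNoetherian R P]
    (g : P →ₗ[R] A) (hg : ∀ p, g p ∈ powTorsion I A) :
    ∃ k, ∀ r ∈ I ^ k, ∀ p, r • g p = 0 := by
  let T : ℕ →o Submodule R P :=
    { toFun k := (Submodule.torsionBySet R A ↑(I ^ k)).comap g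
      monotone' k l hkl p hp := by
        simp only [Submodule.mem_comap, Submodule.mem_torsionBySet_iff] at hp ⊢
        exact fun r ↦ hp ⟨r, Ideal.pow_le_pow_right hkl r.2⟩ }
  obtain ⟨k, hk⟩ := monotone_stabilizes_iff_noetherian.2 ‹IsNoetherian R P› T
  refine ⟨k, fun r hr p ↦ ?_⟩
  obtain ⟨l, hl⟩ := hg p
  have hp : p ∈ T (max k l) := T.monotone (le_max_right k l)
    ((Submodule.mem_torsionBySet_iff _ _).2 fun r ↦ hl r r.2)
  rw [← hk _ (le_max_left k l)] at hp
  exact (Submodule.mem_torsionBySet_iff _ _).1 hp ⟨r, hr⟩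

variable (I A) in
lemma powTorsion_quotient_powTorsion [IsNoetherianRing R] :
    powTorsion I (A ⧸ powTorsion I A) = ⊥ := by
  refine (Submodule.eq_bot_iff _).2 fun a ha ↦ ?_
  obtain ⟨a, rfl⟩ := Submodule.Quotient.mk_surjective _ a
  obtain ⟨k, hk⟩ := ha
  obtain ⟨l, hl⟩ := exists_pow_smul_eq_zero (I := I)
    ((LinearMap.toSpanSingleton R A a) ∘ₗ (I ^ k).subtype) fun p ↦ by
      have := hk p p.2
      rwa [← Submodule.Quotient.mk_smul, Submodule.Quotient.mk_eq_zero] at this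
  refine (Submodule.Quotient.mk_eq_zero _).2 ⟨l + k, fun r hr ↦ ?_⟩
  rw [pow_add] at hr
  refine Submodule.mul_induction_on hr (fun x hx y hy ↦ ?_) fun x y hx hy ↦ ?_
  · rw [mul_smul]; exact hl x hx ⟨y, hy⟩
  · rw [add_smul, hx, hy, add_zero]

lemma powTorsion_annihilator_eq_top : powTorsion (Module.annihilator R A) A = ⊤ :=
  eq_top_iff.2 fun a _ ↦ ⟨1, fun r hr ↦ Module.mem_annihilator.1 (by simpa using hr) a⟩

end Torsion

section Injective

variable (A) in
lemma exists_injective_embedding :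
    ∃ (E : Type u) (_ : AddCommGroup E) (_ : Module R E) (f : A →ₗ[R] E),
      Module.Injective R E ∧ Function.Injective f := by
  let E := Injective.under (ModuleCat.of R A)
  refine ⟨E, inferInstance, inferInstance, (Injective.ι (ModuleCat.of R A)).hom, ?_, ?_⟩
  · have : Injective (ModuleCat.of R E) := inferInstanceAs (Injective E)
    exact (Module.injective_iff_injective_object R E).2 this
  · exact (ModuleCat.mono_iff_injective (Injective.ι (ModuleCat.of R A))).1 inferInstance

variable (I) in
/-- Over a Noetherian ring, the `I`-power torsion of an injective module is injective. -/
lemma injective_powTorsion [IsNoetherianRing R] [hA : Module.Injective R A] :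
    Module.Injective R (powTorsion I A) := by
  refine Module.Baer.injective fun L g ↦ ?_
  let g₀ : L →ₗ[R] A := (powTorsion I A).subtype ∘ₗ g
  obtain ⟨k, hk⟩ := exists_pow_smul_eq_zero (I := I) g₀ fun p ↦ (g p).2
  obtain ⟨l, hl⟩ := Ideal.exists_pow_inf_eq_pow_smul I (L : Submodule R R)
  have hker : ∀ x : L, (x : R) ∈ I ^ (k + l) → g₀ x = 0 := by
    intro x hx
    have h₁ : (x : R) ∈ I ^ k • (L : Submodule R R) := by
      have h₂ : (x : R) ∈ I ^ (k + l) • (⊤ : Submodule R R) ⊓ L :=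
        ⟨by simpa using hx, x.2⟩
      rw [hl _ (by lia), Nat.add_sub_cancel] at h₂
      exact Submodule.smul_mono le_rfl inf_le_right h₂
    have h₂ : I ^ k • (L : Submodule R R) ≤ (LinearMap.ker g₀).map L.subtype := by
      refine Submodule.smul_le.2 fun r hr j hj ↦ ⟨r • ⟨j, hj⟩, ?_, rfl⟩
      change g₀ (r • ⟨j, hj⟩) = 0
      rw [map_smul]
      exact hk r hr _
    obtain ⟨y, hy, hyx⟩ := h₂ h₁
    obtain rfl : y = x := Subtype.ext hyx
    exact hy
  let φ : L →ₗ[R] R ⧸ I ^ (k + l) := (I ^ (k + l)).mkQ ∘ₗ L.subtype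
  have hφ : LinearMap.ker φ ≤ LinearMap.ker g₀ := fun x hx ↦
    hker x ((Submodule.Quotient.mk_eq_zero _).1 hx)
  obtain ⟨h, hh⟩ := hA.out ((LinearMap.ker φ).liftQ φ le_rfl)
    (LinearMap.ker_eq_bot.1 (Submodule.ker_liftQ_eq_bot' _ _ rfl))
    ((LinearMap.ker φ).liftQ g₀ hφ)
  refine ⟨(h ∘ₗ (I ^ (k + l)).mkQ).codRestrict _ fun r ↦ ⟨k + l, fun s hs ↦ ?_⟩, fun x hx ↦ ?_⟩
  · rw [LinearMap.comp_apply, ← map_smul, ← map_smul]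
    have : (I ^ (k + l)).mkQ (s • r) = 0 :=
      (Submodule.Quotient.mk_eq_zero _).2 (Ideal.mul_mem_right r _ hs)
    rw [this, map_zero]
  · exact Subtype.ext (hh (Submodule.Quotient.mk ⟨x, hx⟩))

variable (I) in
lemma injective_quotient_powTorsion [IsNoetherianRing R] [hA : Module.Injective R A] :
    Module.Injective R (A ⧸ powTorsion I A) := by
  obtain ⟨ρ, hρ⟩ := (injective_powTorsion (A := A) I).out (powTorsion I A).subtype
    (Submodule.subtype_injective _) LinearMap.id
  let s : A ⧸ powTorsion I A →ₗ[R] A := (powTorsion I A).liftQ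
    (LinearMap.id - (powTorsion I A).subtype ∘ₗ ρ) fun a ha ↦ by
      have := hρ ⟨a, ha⟩
      simp only [Submodule.subtype_apply] at this
      simp [this]
  have hs : ∀ a, (powTorsion I A).mkQ (s a) = a := by
    intro a
    obtain ⟨a, rfl⟩ := Submodule.Quotient.mk_surjective _ a
    simp [s]
  refine ⟨fun X Y _ _ _ _ f hf g ↦ ?_⟩
  obtain ⟨h, hh⟩ := hA.out f hf (s ∘ₗ g)
  exact ⟨(powTorsion I A).mkQ ∘ₗ h, fun x ↦ by rw [LinearMap.comp_apply, hh]; exact hs _⟩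

lemma exists_injective_embedding_of_powTorsion_eq_top [IsNoetherianRing R]
    (hA : powTorsion I A = ⊤) :
    ∃ (E : Type u) (_ : AddCommGroup E) (_ : Module R E) (f : A →ₗ[R] E),
      Module.Injective R E ∧ Function.Injective f ∧ powTorsion I E = ⊤ := by
  obtain ⟨E, _, _, f, _, hf⟩ := exists_injective_embedding (R := R) A
  exact ⟨powTorsion I E, inferInstance, inferInstance,
    f.codRestrict _ fun a ↦ map_mem_powTorsion f (hA ▸ Submodule.mem_top),
    injective_powTorsion I, fun a b h ↦ hf (congrArg Subtype.val h), powTorsion_powTorsion⟩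

lemma exists_injective_embedding_of_powTorsion_eq_bot [IsNoetherianRing R]
    (hA : powTorsion I A = ⊥) :
    ∃ (E : Type u) (_ : AddCommGroup E) (_ : Module R E) (f : A →ₗ[R] E),
      Module.Injective R E ∧ Function.Injective f ∧ powTorsion I E = ⊥ := by
  obtain ⟨E, _, _, f, _, hf⟩ := exists_injective_embedding (R := R) A
  refine ⟨E ⧸ powTorsion I E, inferInstance, inferInstance, (powTorsion I E).mkQ ∘ₗ f,
    injective_quotient_powTorsion I, ?_, powTorsion_quotient_powTorsion I E⟩
  refine (injective_iff_map_eq_zero _).2 fun a ha ↦ ?_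
  have h : f a ∈ powTorsion I E := (Submodule.Quotient.mk_eq_zero (powTorsion I E)).1 ha
  have h' := mem_powTorsion_of_map hf h
  rwa [hA] at h'

end Injective

section LC

variable (I)

lemma LC.subsingleton_zero (hA : powTorsion I A = ⊥) : Subsingleton (LC I 0 A) := by
  refine subsingleton_of_forall_eq 0 fun x ↦ LC.eval_injective I ?_
  have : LC.eval I A x ∈ powTorsion I A := (LC.range_eval (A := A) I).le ⟨x, rfl⟩
  rw [hA] at this
  rw [map_zero]
  exact this

/-- Local cohomology in degree zero is the power torsion. -/
noncomputable def LC.zeroEquiv (A : Type u) [AddCommGroup A] [Module R A] :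
    LC I 0 A ≃ₗ[R] powTorsion I A :=
  (LinearEquiv.ofInjective _ (LC.eval_injective I)).trans
    (LinearEquiv.ofEq _ _ (LC.range_eval I))

variable {I}

lemma LC.subsingleton_middle {f : A →ₗ[R] B} {g : B →ₗ[R] C} (hf : Function.Injective f)
    (hfg : Function.Exact f g) (hg : Function.Surjective g) {i : ℕ}
    (hA : Subsingleton (LC I i A)) (hC : Subsingleton (LC I i C)) :
    Subsingleton (LC I i B) := by
  refine subsingleton_of_forall_eq 0 fun x ↦ ?_
  obtain ⟨y, rfl⟩ := (LC.map_exact I hf hfg hg i x).1 (Subsingleton.elim _ _)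
  rw [Subsingleton.elim y 0, map_zero]

lemma LC.subsingleton_left {f : A →ₗ[R] B} {g : B →ₗ[R] C} (hf : Function.Injective f)
    (hfg : Function.Exact f g) (hg : Function.Surjective g) {i : ℕ}
    (hB : Subsingleton (LC I (i + 1) B)) (hC : Subsingleton (LC I i C)) :
    Subsingleton (LC I (i + 1) A) := by
  obtain ⟨δ, -, h⟩ := LC.exists_connecting I hf hfg hg i
  refine subsingleton_of_forall_eq 0 fun x ↦ ?_
  obtain ⟨y, rfl⟩ := (h x).1 (Subsingleton.elim _ _)
  rw [Subsingleton.elim y 0, map_zero]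

lemma LC.exists_surjective {f : A →ₗ[R] B} {g : B →ₗ[R] C} (hf : Function.Injective f)
    (hfg : Function.Exact f g) (hg : Function.Surjective g) {i : ℕ}
    (hB : Subsingleton (LC I (i + 1) B)) :
    ∃ δ : LC I i C →ₗ[R] LC I (i + 1) A, Function.Surjective δ := by
  obtain ⟨δ, -, h⟩ := LC.exists_connecting I hf hfg hg i
  exact ⟨δ, fun x ↦ (h x).1 (Subsingleton.elim _ _)⟩

lemma LC.nonempty_equiv_right_left {f : A →ₗ[R] B} {g : B →ₗ[R] C} (hf : Function.Injective f)
    (hfg : Function.Exact f g) (hg : Function.Surjective g) {i : ℕ}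
    (hB : Subsingleton (LC I i B)) (hB' : Subsingleton (LC I (i + 1) B)) :
    Nonempty (LC I i C ≃ₗ[R] LC I (i + 1) A) := by
  obtain ⟨δ, h, h'⟩ := LC.exists_connecting I hf hfg hg i
  refine ⟨LinearEquiv.ofBijective δ ⟨?_, fun x ↦ (h' x).1 (Subsingleton.elim _ _)⟩⟩
  refine (injective_iff_map_eq_zero _).2 fun x hx ↦ ?_
  obtain ⟨y, rfl⟩ := (h x).1 hx
  rw [Subsingleton.elim y 0, map_zero]

lemma LC.nonempty_equiv_middle_right {f : A →ₗ[R] B} {g : B →ₗ[R] C}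
    (hf : Function.Injective f) (hfg : Function.Exact f g) (hg : Function.Surjective g) {i : ℕ}
    (hA : Subsingleton (LC I i A)) (hA' : Subsingleton (LC I (i + 1) A)) :
    Nonempty (LC I i B ≃ₗ[R] LC I i C) := by
  obtain ⟨δ, h, -⟩ := LC.exists_connecting I hf hfg hg i
  refine ⟨LinearEquiv.ofBijective (LC.map I i g)
    ⟨?_, fun x ↦ (h x).1 (Subsingleton.elim _ _)⟩⟩
  refine (injective_iff_map_eq_zero _).2 fun x hx ↦ ?_
  obtain ⟨y, rfl⟩ := (LC.map_exact I hf hfg hg i x).1 hx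
  rw [Subsingleton.elim y 0, map_zero]

/-- The first local cohomology vanishes when torsion classes lift to torsion elements of an
injective module. -/
lemma LC.subsingleton_one {f : A →ₗ[R] B} {g : B →ₗ[R] C} (hf : Function.Injective f)
    (hfg : Function.Exact f g) (hg : Function.Surjective g) [Module.Injective R B]
    (hlift : ∀ c ∈ powTorsion I C, ∃ b ∈ powTorsion I B, g b = c) :
    Subsingleton (LC I 1 A) := by
  obtain ⟨δ, h, h'⟩ := LC.exists_connecting I hf hfg hg 0
  have := LC.subsingleton_of_injective I (A := B) 0
  refine subsingleton_of_forall_eq 0 fun x ↦ ?_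
  obtain ⟨y, rfl⟩ := (h' x).1 (Subsingleton.elim _ _)
  obtain ⟨b, hb, hby⟩ := hlift (LC.eval I C y) ((LC.range_eval (A := C) I).le ⟨y, rfl⟩)
  rw [← LC.range_eval I] at hb
  obtain ⟨z, rfl⟩ := hb
  rw [← LC.eval_map] at hby
  exact (h y).2 ⟨z, LC.eval_injective I hby⟩

lemma exact_mkQ_range (f : A →ₗ[R] B) : Function.Exact f (LinearMap.range f).mkQ :=
  fun _ ↦ Submodule.Quotient.mk_eq_zero (LinearMap.range f)

lemma LC.subsingleton_succ_of_powTorsion_eq_top [IsNoetherianRing R] (i : ℕ)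
    (hA : powTorsion I A = ⊤) : Subsingleton (LC I (i + 1) A) := by
  induction i generalizing A with
  | zero =>
    obtain ⟨E, _, _, f, _, hf, hE⟩ := exists_injective_embedding_of_powTorsion_eq_top hA
    refine LC.subsingleton_one hf (exact_mkQ_range f) (Submodule.mkQ_surjective _) fun c _ ↦ ?_
    obtain ⟨b, rfl⟩ := Submodule.mkQ_surjective _ c
    exact ⟨b, hE ▸ Submodule.mem_top, rfl⟩
  | succ i ih =>
    obtain ⟨E, _, _, f, _, hf, hE⟩ := exists_injective_embedding_of_powTorsion_eq_top hA
    exact LC.subsingleton_left hf (exact_mkQ_range f) (Submodule.mkQ_surjective _)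
      (LC.subsingleton_of_injective I _)
      (ih (powTorsion_eq_top_of_surjective (Submodule.mkQ_surjective _) hE))

variable (I) in
/-- Local cohomology of a `J`-power torsion module is `J`-power torsion. -/
lemma LC.powTorsion_eq_top_of_powTorsion_eq_top [IsNoetherianRing R] (i : ℕ)
    (hA : powTorsion J A = ⊤) : powTorsion J (LC I i A) = ⊤ := by
  induction i generalizing A with
  | zero => exact powTorsion_eq_top_of_injective (LC.eval_injective I) hA
  | succ i ih =>
    obtain ⟨E, _, _, f, _, hf, hE⟩ := exists_injective_embedding_of_powTorsion_eq_top hA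
    obtain ⟨δ, hδ⟩ := LC.exists_surjective hf (exact_mkQ_range f) (Submodule.mkQ_surjective _)
      (LC.subsingleton_of_injective I i)
    exact powTorsion_eq_top_of_surjective hδ
      (ih (powTorsion_eq_top_of_surjective (Submodule.mkQ_surjective _) hE))

variable (I A) in
lemma LC.powTorsion_eq_top (i : ℕ) : powTorsion I (LC I i A) = ⊤ := by
  induction i generalizing A with
  | zero =>
    exact powTorsion_eq_top_of_injective (LC.zeroEquiv I A).injective powTorsion_powTorsion
  | succ i ih =>
    obtain ⟨E, _, _, f, _, hf⟩ := exists_injective_embedding (R := R) A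
    obtain ⟨δ, hδ⟩ := LC.exists_surjective hf (exact_mkQ_range f) (Submodule.mkQ_surjective _)
      (LC.subsingleton_of_injective I i)
    exact powTorsion_eq_top_of_surjective hδ (ih _)

lemma LC.subsingleton_of_subsingleton [Subsingleton A] (i : ℕ) : Subsingleton (LC I i A) := by
  refine subsingleton_of_forall_eq 0 fun x ↦ ?_
  obtain ⟨t, x, rfl⟩ := Module.DirectLimit.exists_of x
  have h : (𝟙 (ModuleCat.of R A)) = 0 := by ext a; exact Subsingleton.elim _ _
  rw [← Abelian.Ext.comp_mk₀_id x, h, Abelian.Ext.mk₀_zero, Abelian.Ext.comp_zero, map_zero]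

lemma LC.subsingleton_congr (e : A ≃ₗ[R] B) {i : ℕ} (hB : Subsingleton (LC I i B)) :
    Subsingleton (LC I i A) := by
  have : Subsingleton (LC I i PUnit.{u + 1}) := LC.subsingleton_of_subsingleton i
  refine LC.subsingleton_middle (f := (0 : PUnit.{u + 1} →ₗ[R] A)) (g := e.toLinearMap)
    (Function.injective_of_subsingleton _) ?_ e.surjective this hB
  intro a
  constructor
  · intro h
    exact ⟨0, ((LinearEquiv.map_eq_zero_iff e).1 h).symm⟩
  · rintro ⟨y, rfl⟩
    simp

lemma LC.nonempty_equiv_quotient_powTorsion [IsNoetherianRing R] (i : ℕ) :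
    Nonempty (LC I (i + 1) A ≃ₗ[R] LC I (i + 1) (A ⧸ powTorsion I A)) :=
  LC.nonempty_equiv_middle_right (Submodule.subtype_injective (powTorsion I A))
    (LinearMap.exact_subtype_mkQ _) (Submodule.mkQ_surjective _)
    (LC.subsingleton_succ_of_powTorsion_eq_top i powTorsion_powTorsion)
    (LC.subsingleton_succ_of_powTorsion_eq_top (i + 1) powTorsion_powTorsion)

variable (I K A) in
/-- Dimension shifting along an injective module without `I`-power torsion. -/
lemma LC.exists_shift [IsNoetherianRing R] :
    ∃ (C : Type u) (_ : AddCommGroup C) (_ : Module R C),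
      (∀ q, Nonempty (LC I q C ≃ₗ[R] LC I (q + 1) A)) ∧
      ∀ n, Subsingleton (LC K n C) → Subsingleton (LC K (n + 1) (A ⧸ powTorsion I A)) := by
  obtain ⟨E, _, _, f, _, hf, hE⟩ :=
    exists_injective_embedding_of_powTorsion_eq_bot (powTorsion_quotient_powTorsion I A)
  refine ⟨E ⧸ LinearMap.range f, inferInstance, inferInstance, fun q ↦ ?_, fun n hn ↦ ?_⟩
  · have hEq : Subsingleton (LC I q E) := by
      cases q with
      | zero => exact LC.subsingleton_zero I hE
      | succ q => exact LC.subsingleton_of_injective I q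
    obtain ⟨e⟩ := LC.nonempty_equiv_right_left hf (exact_mkQ_range f)
      (Submodule.mkQ_surjective _) hEq (LC.subsingleton_of_injective I q)
    obtain ⟨e'⟩ := LC.nonempty_equiv_quotient_powTorsion (I := I) (A := A) q
    exact ⟨e.trans e'.symm⟩
  · exact LC.subsingleton_left hf (exact_mkQ_range f) (Submodule.mkQ_surjective _)
      (LC.subsingleton_of_injective K n) hn

/-- A consequence of the Grothendieck spectral sequence for `I ≤ K`: nonvanishing of the
abutment forces nonvanishing of some entry of the second page. -/
lemma LC.exists_nontrivial_of_le [IsNoetherianRing R] (hIK : I ≤ K) (n : ℕ)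
    (hA : Nontrivial (LC K n A)) : ∃ p q, p + q = n ∧ Nontrivial (LC K p (LC I q A)) := by
  induction n generalizing A with
  | zero =>
    refine ⟨0, 0, rfl, ?_⟩
    by_contra h
    rw [not_nontrivial_iff_subsingleton] at h
    have h₁ : Subsingleton (LC K 0 (powTorsion I A)) :=
      LC.subsingleton_congr (LC.zeroEquiv I A).symm h
    refine not_subsingleton_iff_nontrivial.2 hA (LC.subsingleton_middle
      (Submodule.subtype_injective (powTorsion I A)) (LinearMap.exact_subtype_mkQ _)
      (Submodule.mkQ_surjective _) h₁ (LC.subsingleton_zero K ?_))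
    exact eq_bot_iff.2 ((powTorsion_anti hIK).trans (powTorsion_quotient_powTorsion I A).le)
  | succ n ih =>
    by_cases h : Nontrivial (LC K (n + 1) (LC I 0 A))
    · exact ⟨n + 1, 0, rfl, h⟩
    rw [not_nontrivial_iff_subsingleton] at h
    have h₁ : Subsingleton (LC K (n + 1) (powTorsion I A)) :=
      LC.subsingleton_congr (LC.zeroEquiv I A).symm h
    obtain ⟨C, _, _, hI, hK⟩ := LC.exists_shift I K A
    have h₂ : Nontrivial (LC K n C) := by
      by_contra h₃
      rw [not_nontrivial_iff_subsingleton] at h₃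
      exact not_subsingleton_iff_nontrivial.2 hA (LC.subsingleton_middle
        (Submodule.subtype_injective (powTorsion I A)) (LinearMap.exact_subtype_mkQ _)
        (Submodule.mkQ_surjective _) h₁ (hK n h₃))
    obtain ⟨p, q, hpq, hne⟩ := ih h₂
    refine ⟨p, q + 1, by lia, ?_⟩
    obtain ⟨e⟩ := hI q
    by_contra h₃
    rw [not_nontrivial_iff_subsingleton] at h₃
    exact not_subsingleton_iff_nontrivial.2 hne (LC.subsingleton_congr e h₃)

/-- In an injective module every element is, up to `x`-power torsion, a multiple of `x ^ k`. -/
lemma exists_pow_smul_sub_eq_zero [IsNoetherianRing R] [hA : Module.Injective R A] (x : R)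
    (k : ℕ) (a : A) : ∃ (b : A) (r : ℕ), x ^ r • (a - x ^ k • b) = 0 := by
  let T : ℕ →o Submodule R R :=
    { toFun r := LinearMap.ker (LinearMap.toSpanSingleton R R (x ^ r))
      monotone' r s hrs y hy := by
        rw [LinearMap.mem_ker, LinearMap.toSpanSingleton_apply, smul_eq_mul] at hy ⊢
        rw [← Nat.sub_add_cancel hrs, pow_add, mul_left_comm, hy, mul_zero] }
  obtain ⟨r, hr⟩ := monotone_stabilizes_iff_noetherian.2 ‹IsNoetherian R R› T
  let φ : R →ₗ[R] R := LinearMap.toSpanSingleton R R (x ^ (r + k))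
  have hφ : LinearMap.ker φ ≤ LinearMap.ker (LinearMap.toSpanSingleton R A (x ^ r • a)) := by
    intro y hy
    have hy' : y ∈ T r := by rw [hr (r + k) (by lia)]; exact hy
    have hy'' : y * x ^ r = 0 := hy'
    rw [LinearMap.mem_ker, LinearMap.toSpanSingleton_apply, smul_smul, hy'', zero_smul]
  obtain ⟨h, hh⟩ := hA.out ((LinearMap.ker φ).liftQ φ le_rfl)
    (LinearMap.ker_eq_bot.1 (Submodule.ker_liftQ_eq_bot' _ _ rfl))
    ((LinearMap.ker φ).liftQ _ hφ)
  refine ⟨h 1, r, ?_⟩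
  have h₁ := hh (Submodule.Quotient.mk 1)
  simp only [Submodule.liftQ_apply, LinearMap.toSpanSingleton_apply, one_smul, φ] at h₁
  rw [smul_sub, ← h₁, smul_smul, ← pow_add, ← map_smul, smul_eq_mul, mul_one, sub_self]

lemma mem_powTorsion_span_singleton {x : R} {a : A} :
    a ∈ powTorsion (Ideal.span {x}) A ↔ ∃ k, x ^ k • a = 0 := by
  refine exists_congr fun k ↦ ?_
  rw [Ideal.span_singleton_pow]
  constructor
  · exact fun h ↦ h _ (Ideal.mem_span_singleton_self _)
  · intro h r hr
    obtain ⟨s, rfl⟩ := Ideal.mem_span_singleton'.1 hr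
    rw [mul_smul, h, smul_zero]

/-- The cohomological dimension of a principal ideal is at most one. -/
lemma LC.subsingleton_span_singleton [IsNoetherianRing R] (x : R) (i : ℕ) :
    Subsingleton (LC (Ideal.span {x}) (i + 2) A) := by
  induction i generalizing A with
  | zero =>
    obtain ⟨E, _, _, f, _, hf⟩ := exists_injective_embedding (R := R) A
    refine LC.subsingleton_left hf (exact_mkQ_range f) (Submodule.mkQ_surjective _)
      (LC.subsingleton_of_injective _ _) ?_
    obtain ⟨F, _, _, g, _, hg⟩ := exists_injective_embedding (R := R) (E ⧸ LinearMap.range f)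
    refine LC.subsingleton_one hg (exact_mkQ_range g) (Submodule.mkQ_surjective _) fun c hc ↦ ?_
    obtain ⟨b, rfl⟩ := Submodule.mkQ_surjective _ c
    obtain ⟨k, hk⟩ := mem_powTorsion_span_singleton.1 hc
    rw [← map_smul, Submodule.mkQ_apply, Submodule.Quotient.mk_eq_zero] at hk
    obtain ⟨q, hq⟩ := hk
    obtain ⟨e, rfl⟩ := Submodule.mkQ_surjective _ q
    obtain ⟨y, r, hy⟩ := exists_pow_smul_sub_eq_zero x k e
    refine ⟨b - g (Submodule.mkQ _ y), mem_powTorsion_span_singleton.2 ⟨r + k, ?_⟩, ?_⟩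
    · rw [pow_add, mul_smul, smul_sub, ← hq, ← map_smul, ← map_smul, ← map_sub, ← map_sub,
        ← map_smul, ← map_smul, hy, map_zero, map_zero]
    · rw [map_sub, (exact_mkQ_range g).apply_apply_eq_zero, sub_zero]
  | succ i ih =>
    obtain ⟨E, _, _, f, _, hf⟩ := exists_injective_embedding (R := R) A
    exact LC.subsingleton_left hf (exact_mkQ_range f) (Submodule.mkQ_surjective _)
      (LC.subsingleton_of_injective _ _) ih

/-- If `K` is contained in the radical of `J + (s)`, then the local cohomology with support in
`K ⊇ s` of a `J`-power torsion module vanishes above the number of elements of `s`. -/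
lemma LC.subsingleton_of_card_lt [IsNoetherianRing R] (s : Finset R)
    (hs : ∀ x ∈ s, x ∈ K) (hK : K ≤ (J ⊔ Ideal.span (s : Set R)).radical)
    (hA : powTorsion J A = ⊤) {p : ℕ} (hp : s.card < p) : Subsingleton (LC K p A) := by
  classical
  induction s using Finset.induction_on generalizing A J p with
  | empty =>
    obtain ⟨p, rfl⟩ := Nat.exists_eq_succ_of_ne_zero (Nat.ne_zero_of_lt hp)
    refine LC.subsingleton_succ_of_powTorsion_eq_top p (eq_top_iff.2 ?_)
    rw [← hA]
    exact powTorsion_le_of_le_radical (by simpa using hK)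
  | insert x s hx ih =>
    by_contra h
    rw [not_subsingleton_iff_nontrivial] at h
    obtain ⟨a, b, hab, hne⟩ := LC.exists_nontrivial_of_le (I := Ideal.span {x})
      ((Ideal.span_singleton_le_iff_mem _).2 (hs x (Finset.mem_insert_self x s))) p h
    rw [Finset.card_insert_of_notMem hx] at hp
    have hb : b < 2 := by
      by_contra hb
      obtain ⟨b, rfl⟩ := Nat.exists_eq_add_of_le' (not_lt.1 hb)
      have := LC.subsingleton_span_singleton (A := A) x b
      exact not_subsingleton_iff_nontrivial.2 hne (LC.subsingleton_of_subsingleton a)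
    refine not_subsingleton_iff_nontrivial.2 hne (ih (J := J ⊔ Ideal.span {x})
      (fun y hy ↦ hs y (Finset.mem_insert_of_mem hy)) ?_ ?_ (by lia))
    · rwa [sup_assoc, ← Ideal.span_union, Set.singleton_union, ← Finset.coe_insert]
    · exact powTorsion_sup_eq_top (LC.powTorsion_eq_top_of_powTorsion_eq_top _ b hA)
        (LC.powTorsion_eq_top _ _ b)

end LC

section Local

variable [IsNoetherianRing R] [IsLocalRing R]

/-- Artinian modules over a Noetherian local ring are power torsion. -/
lemma powTorsion_maximalIdeal_eq_top [IsArtinian R A] :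
    powTorsion (IsLocalRing.maximalIdeal R) A = ⊤ := by
  refine eq_top_iff.2 fun a _ ↦ ?_
  let N : Submodule R A := Submodule.span R {a}
  let T : ℕ →o (Submodule R A)ᵒᵈ :=
    { toFun k := OrderDual.toDual (IsLocalRing.maximalIdeal R ^ k • N)
      monotone' _ _ hkl := Submodule.smul_mono_left (Ideal.pow_le_pow_right hkl) }
  obtain ⟨k, hk⟩ := IsArtinian.monotone_stabilizes T
  have h : IsLocalRing.maximalIdeal R ^ k • N = IsLocalRing.maximalIdeal R ^ (k + 1) • N :=
    hk (k + 1) (by lia)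
  have hbot : IsLocalRing.maximalIdeal R ^ k • N = ⊥ := by
    refine Submodule.eq_bot_of_le_smul_of_le_jacobson_bot (IsLocalRing.maximalIdeal R) _
      ?_ ?_ (IsLocalRing.maximalIdeal_le_jacobson _)
    · exact Submodule.FG.smul (IsNoetherian.noetherian _) (Submodule.fg_span_singleton a)
    · rw [← Submodule.mul_smul, ← pow_succ', ← h]
  refine ⟨k, fun r hr ↦ ?_⟩
  have := Submodule.smul_mem_smul hr (Submodule.mem_span_singleton_self (R := R) a)
  rwa [hbot] at this

lemma exists_finset_of_ringKrullDim_eq {d : ℕ}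
    (hd : ringKrullDim (R ⧸ J) = (d : WithBot ℕ∞)) :
    ∃ s : Finset R, s.card ≤ d ∧ (∀ x ∈ s, x ∈ IsLocalRing.maximalIdeal R) ∧
      IsLocalRing.maximalIdeal R ≤ (J ⊔ Ideal.span (s : Set R)).radical := by
  classical
  have : Nontrivial (R ⧸ J) := by
    by_contra h
    rw [not_nontrivial_iff_subsingleton] at h
    rw [ringKrullDim_eq_bot_of_subsingleton] at hd
    exact WithBot.bot_ne_coe hd
  have : IsLocalRing (R ⧸ J) := .of_surjective' (Ideal.Quotient.mk J) Ideal.Quotient.mk_surjective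
  obtain ⟨t, ht, htd⟩ := Ideal.exists_finset_card_eq_height_of_isNoetherianRing
    (IsLocalRing.maximalIdeal (R ⧸ J))
  have htd' : t.card = d := by
    rw [← IsLocalRing.maximalIdeal_height_eq_ringKrullDim, ← htd] at hd
    exact_mod_cast hd
  have hcomap : (IsLocalRing.maximalIdeal (R ⧸ J)).comap (Ideal.Quotient.mk J) =
      IsLocalRing.maximalIdeal R :=
    IsLocalRing.eq_maximalIdeal (Ideal.comap_isMaximal_of_surjective _
      Ideal.Quotient.mk_surjective)
  have hrad : IsLocalRing.maximalIdeal (R ⧸ J) ≤ (Ideal.span (t : Set (R ⧸ J))).radical := by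
    rw [← Ideal.sInf_minimalPrimes]
    refine le_sInf fun q hq ↦ ht.2 hq.1 (IsLocalRing.le_maximalIdeal hq.1.1.ne_top)
  let σ : R ⧸ J → R := Function.surjInv Ideal.Quotient.mk_surjective
  have hσ : ∀ y, Ideal.Quotient.mk J (σ y) = y := Function.surjInv_eq _
  refine ⟨t.image σ, htd' ▸ Finset.card_image_le, fun x hx ↦ ?_, ?_⟩
  · obtain ⟨y, hy, rfl⟩ := Finset.mem_image.1 hx
    rw [← hcomap, Ideal.mem_comap, hσ]
    exact ht.1.2 (Ideal.subset_span hy)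
  · have hmap : (Ideal.span ((t.image σ : Finset R) : Set R)).map (Ideal.Quotient.mk J) =
        Ideal.span (t : Set (R ⧸ J)) := by
      rw [Ideal.map_span, Finset.coe_image, Set.image_image]
      simp only [hσ, Set.image_id']
    rw [← hcomap, ← Ideal.comap_map_quotientMk, hmap, ← Ideal.comap_radical]
    exact Ideal.comap_mono hrad

/-- Vanishing of local cohomology above the dimension of the support. -/
lemma LC.subsingleton_of_ringKrullDim_lt {d p : ℕ}
    (hd : ringKrullDim (R ⧸ J) = (d : WithBot ℕ∞)) (hA : powTorsion J A = ⊤) (hp : d < p) :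
    Subsingleton (LC (IsLocalRing.maximalIdeal R) p A) := by
  obtain ⟨s, hsd, hs, hK⟩ := exists_finset_of_ringKrullDim_eq hd
  exact LC.subsingleton_of_card_lt s hs hK hA (by lia)

end Local

end LocalCohomologyAux

namespace LocalCohomologyAux

open Opposite

section Homology

variable {R : Type u} [CommRing R] (K L : CochainComplex (ModuleCat.{u} R) ℕ) (n : ℕ)

lemma iCycles_injective : Function.Injective (K.iCycles n) :=
  (ModuleCat.mono_iff_injective (K.iCycles n)).1 inferInstance

/-- The kernel of the differential maps to the cycles. -/
noncomputable def cocycleToCycles : LinearMap.ker (K.d n (n + 1)).hom →ₗ[R] K.cycles n :=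
  (K.liftCycles (ModuleCat.ofHom (LinearMap.ker (K.d n (n + 1)).hom).subtype) (n + 1)
    (by simp) (by ext x; exact x.2)).hom

lemma iCycles_cocycleToCycles (x : LinearMap.ker (K.d n (n + 1)).hom) :
    K.iCycles n (cocycleToCycles K n x) = x.1 :=
  congr($(K.liftCycles_i (ModuleCat.ofHom (LinearMap.ker (K.d n (n + 1)).hom).subtype) (n + 1)
    (by simp) (by ext x; exact x.2)) x)

/-- The projection from cocycles to cohomology. -/
noncomputable def cocycleToHomology : LinearMap.ker (K.d n (n + 1)).hom →ₗ[R] K.homology n :=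
  (K.homologyπ n).hom ∘ₗ cocycleToCycles K n

lemma cocycleToCycles_surjective : Function.Surjective (cocycleToCycles K n) := by
  refine fun z ↦ ⟨⟨K.iCycles n z, ?_⟩, iCycles_injective K n (iCycles_cocycleToCycles K n _)⟩
  rw [LinearMap.mem_ker]
  exact congr($(K.iCycles_d n (n + 1)) z)

lemma cocycleToHomology_surjective : Function.Surjective (cocycleToHomology K n) :=
  ((ModuleCat.epi_iff_surjective (K.homologyπ n)).1 inferInstance).comp
    (cocycleToCycles_surjective K n)

lemma cocycleToHomology_eq_zero_iff (x : LinearMap.ker (K.d n (n + 1)).hom) :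
    cocycleToHomology K n x = 0 ↔ ∃ y, K.d (n - 1) n y = x.1 := by
  have hprev : (ComplexShape.up ℕ).prev n = n - 1 := by cases n <;> simp
  have hex := (ShortComplex.ShortExact.moduleCat_exact_iff_function_exact _).1
    (ShortComplex.exact_of_g_is_cokernel
      (ShortComplex.mk _ _ (K.toCycles_comp_homologyπ (n - 1) n))
      (K.homologyIsCokernel (n - 1) n hprev))
  refine (hex (cocycleToCycles K n x)).trans (exists_congr fun y ↦ ?_)
  rw [← (iCycles_injective K n).eq_iff, iCycles_cocycleToCycles, ← ModuleCat.comp_apply,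
    HomologicalComplex.toCycles_i]

variable {K L} in
lemma homologyMap_cocycleToHomology (φ : K ⟶ L) (x : LinearMap.ker (K.d n (n + 1)).hom)
    (y : LinearMap.ker (L.d n (n + 1)).hom) (h : y.1 = φ.f n x.1) :
    HomologicalComplex.homologyMap φ n (cocycleToHomology K n x) = cocycleToHomology L n y := by
  have h₁ : HomologicalComplex.cyclesMap φ n (cocycleToCycles K n x) = cocycleToCycles L n y := by
    apply iCycles_injective
    rw [← ModuleCat.comp_apply, HomologicalComplex.cyclesMap_i, ModuleCat.comp_apply,
      iCycles_cocycleToCycles, iCycles_cocycleToCycles, h]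
  have h₂ : HomologicalComplex.homologyMap φ n (K.homologyπ n (cocycleToCycles K n x)) =
      L.homologyπ n (HomologicalComplex.cyclesMap φ n (cocycleToCycles K n x)) :=
    congr($(HomologicalComplex.homologyπ_naturality φ n) (cocycleToCycles K n x))
  exact h₂.trans congr(L.homologyπ n $h₁)

end Homology

section Ext

variable {R : Type u} [CommRing R] {X X' : ModuleCat.{u} R}

/-- The map of Hom complexes induced by a map of resolutions. -/
noncomputable def linearYonedaMap {P P' : ChainComplex (ModuleCat.{u} R) ℕ} (φ : P' ⟶ P)
    (Y : ModuleCat.{u} R) : P.linearYonedaObj R Y ⟶ P'.linearYonedaObj R Y :=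
  (HomologicalComplex.unopFunctor _ _).map
    ((((linearYoneda R (ModuleCat.{u} R)).obj Y).rightOp.mapHomologicalComplex _).map φ).op

lemma isoExt_inv_naturality (P : ProjectiveResolution X) (P' : ProjectiveResolution X')
    {g : X' ⟶ X} (φ : ProjectiveResolution.Hom P' P g) (n : ℕ) (Y : ModuleCat.{u} R) :
    (P.isoExt n Y).inv ≫ ((Ext R (ModuleCat.{u} R) n).map g.op).app Y =
      HomologicalComplex.homologyMap (linearYonedaMap φ.hom Y) n ≫ (P'.isoExt n Y).inv := by
  have h₁ := congr($(ProjectiveResolution.isoLeftDerivedObj_hom_naturality g P' P φ.hom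
    (by simpa using φ.hom_f_zero_comp_π_f_zero)
    ((linearYoneda R (ModuleCat.{u} R)).obj Y).rightOp n).unop)
  have h₂ := congr($(HomologicalComplex.homologyOp_hom_naturality (linearYonedaMap φ.hom Y) n).unop)
  exact (Category.assoc _ _ _).trans ((congr(_ ≫ $h₁)).trans
    ((Category.assoc _ _ _).symm.trans ((congr($h₂ ≫ _)).trans (Category.assoc _ _ _))))

end Ext

section Ext

variable {R : Type u} [CommRing R] {X X' : ModuleCat.{u} R} (P : ProjectiveResolution X)
  (P' : ProjectiveResolution X') (Y : ModuleCat.{u} R) (n : ℕ)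

/-- The module of degree `n` cocycles of `Hom(P, Y)`. -/
def cocycleModule : Submodule R (P.complex.X n ⟶ Y) where
  carrier := {f | P.complex.d (n + 1) n ≫ f = 0}
  zero_mem' := Limits.comp_zero
  add_mem' {f g} hf hg := by
    rw [Set.mem_ofPred_eq] at hf hg ⊢
    rw [Preadditive.comp_add, hf, hg, add_zero]
  smul_mem' r f hf := by
    rw [Set.mem_ofPred_eq] at hf ⊢
    rw [Linear.comp_smul, hf, smul_zero]

/-- Cocycles as elements of the kernel of the differential of the Hom complex. -/
noncomputable def cocycleModuleEquiv : cocycleModule P Y n ≃ₗ[R]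
    LinearMap.ker ((P.complex.linearYonedaObj R Y).d n (n + 1)).hom where
  toFun f := ⟨f.1, f.2⟩
  invFun f := ⟨f.1, f.2⟩
  map_add' _ _ := rfl
  map_smul' _ _ := rfl

/-- The class of a cocycle in the `Ext`-module given by derived functors. -/
noncomputable def cocycleToExt :
    cocycleModule P Y n →ₗ[R] ((Ext R (ModuleCat.{u} R) n).obj (op X)).obj Y :=
  (P.isoExt n Y).symm.toLinearEquiv.toLinearMap ∘ₗ
    cocycleToHomology (P.complex.linearYonedaObj R Y) n ∘ₗ
      (cocycleModuleEquiv P Y n).toLinearMap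

lemma cocycleToExt_surjective : Function.Surjective (cocycleToExt P Y n) :=
  ((P.isoExt n Y).symm.toLinearEquiv).surjective.comp
    ((cocycleToHomology_surjective _ n).comp (cocycleModuleEquiv P Y n).surjective)

lemma cocycleToExt_eq_zero_iff (f : cocycleModule P Y n) :
    cocycleToExt P Y n f = 0 ↔
      ∃ g : P.complex.X (n - 1) ⟶ Y, P.complex.d n (n - 1) ≫ g = f.1 :=
  ((P.isoExt n Y).symm.toLinearEquiv).map_eq_zero_iff.trans (cocycleToHomology_eq_zero_iff
    (P.complex.linearYonedaObj R Y) n (cocycleModuleEquiv P Y n f))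

variable {P P'} in
/-- Pullback of cocycles along a map of resolutions. -/
noncomputable def cocycleMap {g : X' ⟶ X} (φ : ProjectiveResolution.Hom P' P g)
    (f : cocycleModule P Y n) : cocycleModule P' Y n :=
  ⟨φ.hom.f n ≫ f.1, by
    have : P.complex.d (n + 1) n ≫ f.1 = 0 := f.2
    change P'.complex.d (n + 1) n ≫ φ.hom.f n ≫ f.1 = 0
    rw [← φ.hom.comm_assoc, this, Limits.comp_zero]⟩

variable {P P'} in
lemma map_cocycleToExt {g : X' ⟶ X} (φ : ProjectiveResolution.Hom P' P g)
    (f : cocycleModule P Y n) :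
    ((Ext R (ModuleCat.{u} R) n).map g.op).app Y (cocycleToExt P Y n f) =
      cocycleToExt P' Y n (cocycleMap Y n φ f) := by
  refine (congr($(isoExt_inv_naturality P P' φ n Y)
    (cocycleToHomology (P.complex.linearYonedaObj R Y) n (cocycleModuleEquiv P Y n f)))).trans ?_
  exact congr((P'.isoExt n Y).inv $(homologyMap_cocycleToHomology n
    (linearYonedaMap φ.hom Y) (cocycleModuleEquiv P Y n f)
      (cocycleModuleEquiv P' Y n (cocycleMap Y n φ f)) rfl))

/-- The class of a cocycle in the `Ext`-module given by the derived category. -/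
noncomputable def cocycleToDerivedExt : cocycleModule P Y n →ₗ[R] Abelian.Ext X Y n where
  toFun f := P.extMk f.1 (n + 1) rfl f.2
  map_add' f g := (P.add_extMk _ _ _ _ _ _).symm
  map_smul' r f := by
    refine Eq.trans ?_ ((Abelian.Ext.smul_eq_comp_mk₀ _ _).trans
      (P.extMk_comp_mk₀ f.1 (n + 1) rfl f.2 (r • 𝟙 Y))).symm
    congr 1

lemma cocycleToDerivedExt_surjective : Function.Surjective (cocycleToDerivedExt P Y n) := by
  intro y
  obtain ⟨f, hf, rfl⟩ := P.extMk_surjective y (n + 1) rfl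
  exact ⟨⟨f, hf⟩, rfl⟩

lemma extMk_eq_zero_iff_of_degree_zero {Y : ModuleCat.{u} R} (f : P.complex.X 0 ⟶ Y)
    (hf : P.complex.d 1 0 ≫ f = 0) : P.extMk f 1 rfl hf = 0 ↔ f = 0 := by
  refine ⟨fun h ↦ ?_, ?_⟩
  · rw [← P.extEquivCohomologyClass.apply_eq_iff_eq,
      ProjectiveResolution.extEquivCohomologyClass_extMk,
      ProjectiveResolution.extEquivCohomologyClass_zero,
      CochainComplex.HomComplex.CohomologyClass.mk_eq_zero_iff,
      CochainComplex.HomComplex.Cocycle.toSingleMk_mem_coboundaries_iff _ _ _ _ _ 1 (by simp)] at h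
    obtain ⟨g, hg⟩ := h
    rw [← cancel_epi (P.cochainComplexXIso (-(0 : ℕ)) 0 rfl).hom, ← hg, Limits.comp_zero,
      (P.cochainComplex.isZero_of_isStrictlyLE 0 1 (by simp)).eq_of_src g 0, Limits.comp_zero]
  · rintro rfl
    exact P.extMk_zero 1 rfl

lemma cocycleToDerivedExt_eq_zero_iff (f : cocycleModule P Y n) :
    cocycleToDerivedExt P Y n f = 0 ↔
      ∃ g : P.complex.X (n - 1) ⟶ Y, P.complex.d n (n - 1) ≫ g = f.1 := by
  cases n with
  | zero =>
    refine (extMk_eq_zero_iff_of_degree_zero P f.1 f.2).trans ?_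
    simp [eq_comm]
  | succ n => exact P.extMk_eq_zero_iff f.1 _ rfl f.2 n rfl

variable {P P'} in
lemma mk₀_comp_cocycleToDerivedExt {g : X' ⟶ X} (φ : ProjectiveResolution.Hom P' P g)
    (f : cocycleModule P Y n) :
    (Abelian.Ext.mk₀ g).comp (cocycleToDerivedExt P Y n f) (zero_add n) =
      cocycleToDerivedExt P' Y n (cocycleMap Y n φ f) :=
  ProjectiveResolution.mk₀_comp_extMk f.1 _ rfl f.2 φ

variable (X) in
/-- The comparison between the two constructions of `Ext`. -/
noncomputable def extComparison :
    ((Ext R (ModuleCat.{u} R) n).obj (op X)).obj Y ≃ₗ[R] Abelian.Ext X Y n :=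
  ((cocycleToExt (projectiveResolution X) Y n).quotKerEquivOfSurjective
      (cocycleToExt_surjective _ Y n)).symm.trans
    ((Submodule.quotEquivOfEq _ _ (by
      ext f
      rw [LinearMap.mem_ker, LinearMap.mem_ker, cocycleToExt_eq_zero_iff,
        cocycleToDerivedExt_eq_zero_iff])).trans
    ((cocycleToDerivedExt (projectiveResolution X) Y n).quotKerEquivOfSurjective
      (cocycleToDerivedExt_surjective _ Y n)))

lemma extComparison_cocycleToExt (f : cocycleModule (projectiveResolution X) Y n) :
    extComparison X Y n (cocycleToExt _ Y n f) = cocycleToDerivedExt _ Y n f := by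
  have : ((cocycleToExt (projectiveResolution X) Y n).quotKerEquivOfSurjective
      (cocycleToExt_surjective _ Y n)).symm (cocycleToExt _ Y n f) = Submodule.Quotient.mk f :=
    (LinearEquiv.symm_apply_eq _).2 rfl
  simp only [extComparison, LinearEquiv.trans_apply, this]
  rfl

lemma extComparison_naturality (g : X' ⟶ X)
    (x : ((Ext R (ModuleCat.{u} R) n).obj (op X)).obj Y) :
    extComparison X' Y n (((Ext R (ModuleCat.{u} R) n).map g.op).app Y x) =
      (Abelian.Ext.mk₀ g).comp (extComparison X Y n x) (zero_add n) := by
  obtain ⟨f, rfl⟩ := cocycleToExt_surjective (projectiveResolution X) Y n x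
  let φ : ProjectiveResolution.Hom (projectiveResolution X') (projectiveResolution X) g :=
    { hom := ProjectiveResolution.lift g _ _
      hom_f_zero_comp_π_f_zero := by
        simpa using ProjectiveResolution.lift_commutes_zero g _ _ }
  rw [map_cocycleToExt Y n φ, extComparison_cocycleToExt, extComparison_cocycleToExt,
    mk₀_comp_cocycleToDerivedExt Y n φ]

end Ext

section Comparison

variable {R : Type u} [CommRing R] (I : Ideal R) (i : ℕ) (M : ModuleCat.{u} R)

/-- The diagram of the modules `Ext^i(R ⧸ I ^ t, M)`. -/
noncomputable abbrev extDiagram : (ℕᵒᵖ)ᵒᵖ ⥤ ModuleCat.{u} R :=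
  localCohomology.diagram (localCohomology.idealPowersDiagram I) i ⋙ (evaluation _ _).obj M

/-- The comparison of `Ext^i(R ⧸ I ^ t, M)` computed in the two ways. -/
noncomputable abbrev extDiagramEquiv (t : (ℕᵒᵖ)ᵒᵖ) :
    (extDiagram I i M).obj t ≃ₗ[R]
      Abelian.Ext (ModuleCat.of R (R ⧸ I ^ t.unop.unop)) (ModuleCat.of R M) i :=
  extComparison (ModuleCat.of R (R ⧸ I ^ t.unop.unop)) M i

lemma extDiagramEquiv_map {s t : (ℕᵒᵖ)ᵒᵖ} (f : s ⟶ t) (x : (extDiagram I i M).obj s) :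
    extDiagramEquiv I i M t ((extDiagram I i M).map f x) =
      extTrans I i M s.unop.unop t.unop.unop (leOfHom f.unop.unop)
        (extDiagramEquiv I i M s x) :=
  extComparison_naturality M i (quotPowHom I (leOfHom f.unop.unop)) x

/-- `LC I i M` as a cocone over the diagram of the modules `Ext^i(R ⧸ I ^ t, M)`. -/
noncomputable def lcCocone : Limits.Cocone (extDiagram I i M) where
  pt := ModuleCat.of R (LC I i M)
  ι :=
    { app t := ModuleCat.ofHom (Module.DirectLimit.of R ℕ _ (extTrans I i M) t.unop.unop ∘ₗ
        (extDiagramEquiv I i M t).toLinearMap)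
      naturality s t f := by
        ext x
        refine (congrArg (Module.DirectLimit.of R ℕ _ (extTrans I i M) t.unop.unop)
          (extDiagramEquiv_map I i M f x)).trans ?_
        exact Module.DirectLimit.of_f }

/-- The map out of `LC I i M` induced by a cocone. -/
noncomputable def lcDesc (s : Limits.Cocone (extDiagram I i M)) : LC I i M →ₗ[R] s.pt :=
  Module.DirectLimit.lift R ℕ _ (extTrans I i M)
    (fun t ↦ (s.ι.app (op (op t))).hom ∘ₗ
      (extDiagramEquiv I i M (op (op t))).symm.toLinearMap) (by
        intro t v h x
        obtain ⟨x, rfl⟩ := (extDiagramEquiv I i M (op (op t))).surjective x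
        have := extDiagramEquiv_map I i M (homOfLE h).op.op x
        refine (congrArg (fun y ↦ (s.ι.app (op (op v))).hom
          ((extDiagramEquiv I i M (op (op v))).symm y)) this.symm).trans ?_
        simp only [LinearEquiv.symm_apply_apply, LinearMap.comp_apply, LinearEquiv.coe_coe]
        exact congr($(s.w (homOfLE h).op.op) x))

lemma lcDesc_of (s : Limits.Cocone (extDiagram I i M)) (t : ℕ)
    (x : (extDiagram I i M).obj (op (op t))) :
    lcDesc I i M s (Module.DirectLimit.of R ℕ _ (extTrans I i M) t
      (extDiagramEquiv I i M (op (op t)) x)) = s.ι.app (op (op t)) x := by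
  rw [lcDesc, Module.DirectLimit.lift_of, LinearMap.comp_apply, LinearEquiv.coe_coe,
    LinearEquiv.symm_apply_apply]

/-- `LC I i M` is the colimit of the modules `Ext^i(R ⧸ I ^ t, M)`. -/
noncomputable def lcCoconeIsColimit : Limits.IsColimit (lcCocone I i M) where
  desc s := ModuleCat.ofHom (lcDesc I i M s)
  fac s t := by
    ext x
    exact lcDesc_of I i M s t.unop.unop x
  uniq s m hm := by
    ext x
    obtain ⟨t, x, rfl⟩ := Module.DirectLimit.exists_of x
    obtain ⟨x, rfl⟩ := (extDiagramEquiv I i M (op (op t))).surjective x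
    exact (congr($(hm (op (op t))) x)).trans (lcDesc_of I i M s t x).symm

/-- Local cohomology is the direct limit of the derived-category `Ext`-modules. -/
noncomputable def localCohomologyEquiv : (localCohomology I i).obj M ≃ₗ[R] LC I i M :=
  haveI := localCohomology.hasColimitDiagram.{u, 0} (localCohomology.idealPowersDiagram I) i
  ((Limits.isColimitOfPreserves ((evaluation _ _).obj M)
    (Limits.colimit.isColimit (localCohomology.diagram
      (localCohomology.idealPowersDiagram I) i))).coconePointUniqueUpToIso
        (lcCoconeIsColimit I i M)).toLinearEquiv

end Comparison

end LocalCohomologyAux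

open LocalCohomologyAux in
/-- over a Noetherian local ring, if `M` has Krull dimension `n` with
`H^n_m(M) ≠ 0`, `dim (R/(I + Ann M)) = d`, and `H^{cd(I,M)}_I(M)` is Artinian, then either
`cd(I,M) = n` or `H^{n-i}_m(H^i_I(M)) ≠ 0` for some `n - d ≤ i < cd(I,M)`. -/
theorem cd_eq_dim_or_exists_nontrivial_of_isArtinian_top_localCohomology
    (R : Type u) [CommRing R] [IsNoetherianRing R] [IsLocalRing R]
    (M : ModuleCat.{u} R) (n : ℕ)
    (hn : Order.krullDim (Module.support R M) = (n : WithBot ℕ∞))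
    (hne : Nontrivial ((localCohomology (IsLocalRing.maximalIdeal R) n).obj M))
    (I : Ideal R) (d : ℕ)
    (hd : ringKrullDim (R ⧸ (I + Module.annihilator R M)) = (d : WithBot ℕ∞))
    (c : ℕ) (hc : cohomologicalDimension I M = (c : ℕ∞))
    (hart : IsArtinian R ((localCohomology I c).obj M)) :
    c = n ∨ ∃ i, n - d ≤ i ∧ i < c ∧
      Nontrivial ((localCohomology (IsLocalRing.maximalIdeal R) (n - i)).obj
        ((localCohomology I i).obj M)) := by
  have hIm : I ≤ IsLocalRing.maximalIdeal R := by
    refine le_trans le_sup_left (IsLocalRing.le_maximalIdeal (J := I ⊔ Module.annihilator R M) ?_)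
    intro h
    have : Subsingleton (R ⧸ (I + Module.annihilator R M)) :=
      Ideal.Quotient.subsingleton_iff.2 h
    rw [ringKrullDim_eq_bot_of_subsingleton] at hd
    exact WithBot.bot_ne_coe hd
  have hne' := (localCohomologyEquiv (IsLocalRing.maximalIdeal R) n M).symm.toEquiv.nontrivial
  obtain ⟨p, q, rfl, hpq⟩ := LC.exists_nontrivial_of_le hIm n hne'
  have hq : Nontrivial (LC I q M) := by
    by_contra h
    rw [not_nontrivial_iff_subsingleton] at h
    exact not_subsingleton_iff_nontrivial.2 hpq (LC.subsingleton_of_subsingleton p)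
  have hqc : q ≤ c := by
    have : (q : ℕ∞) ≤ cohomologicalDimension I M :=
      le_sSup ⟨q, rfl, (localCohomologyEquiv I q M).toEquiv.nontrivial⟩
    rw [hc] at this
    exact_mod_cast this
  have hpd : p ≤ d := by
    by_contra! h
    exact not_subsingleton _ (LC.subsingleton_of_ringKrullDim_lt hd (powTorsion_sup_eq_top
      (LC.powTorsion_eq_top I M q)
      (LC.powTorsion_eq_top_of_powTorsion_eq_top I q powTorsion_annihilator_eq_top)) h)
  obtain rfl | hlt := hqc.eq_or_lt
  · left
    have : IsArtinian R (LC I q M) := (localCohomologyEquiv I q M).isArtinian_iff.1 hart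
    cases p with
    | zero => simp
    | succ p =>
      exact absurd (LC.subsingleton_succ_of_powTorsion_eq_top p powTorsion_maximalIdeal_eq_top)
        (not_subsingleton_iff_nontrivial.2 hpq)
  · refine Or.inr ⟨q, by lia, hlt, ?_⟩
    rw [Nat.add_sub_cancel]
    by_contra h
    rw [not_nontrivial_iff_subsingleton] at h
    have := (localCohomologyEquiv (IsLocalRing.maximalIdeal R) p
      ((localCohomology I q).obj M)).symm.toEquiv.subsingleton
    exact not_subsingleton _ (LC.subsingleton_congr (localCohomologyEquiv I q M).symm this)
end
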